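/- arXiv:2011.09061 — 6 statements merged into one kernel-verified Lean document; each statement's English description precedes it below -/
import Mathlib

section
/- If G is a k-connected finite simple graph on n vertices with n ≤ 5k − 2, then any two longest paths in G share at least k vertices. -/
/-!
Let `P` and `Q` be longest paths with `L` vertices each, sharing `m < k` vertices, and let `H` be a
component of `G - V(P)`. Call a position on `P` an attachment if its vertex has a neighbour in `H`,
and let `A` be the set of attachments.

Rerouting `P` through `H` shows that attachments are interior, that two of them differ by at least
`2`, and by at least `3` if they can be joined through a path of `H` with more than one vertex
(`exists_detached`). As `A` separates `H` from the first vertex of `P`, it has at least `k`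
elements (`Detached.le_card_attach`), and since `A` and `A + 1` are disjoint this gives `L ≥ 2k`
(`Detached.count`). Hence `Q`, with only `m ≤ k - 1` vertices on `P`, has two consecutive vertices
off `P`.

Taking `H` to be the component of that edge, so `|H| ≥ 2`, a finer count gives `L ≥ 3k`
(`Detached.three_mul_le`). Then `n ≥ |V(P) ∪ V(Q)| = 2L - m ≥ 6k - (k - 1) = 5k + 1`, contrary to
`n ≤ 5k - 2`.
-/


open SimpleGraph

/-- A graph is `k`-connected if it has more than `k` vertices and removing any
set of fewer than `k` vertices leaves the graph connected. -/
def IsKConnected {V : Type*} [Fintype V] (G : SimpleGraph V) (k : ℕ) : Prop :=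
  k < Fintype.card V ∧
    ∀ S : Finset V, S.card < k → (G.induce ((↑S : Set V)ᶜ)).Connected

/-- A walk is a longest path if it is a path and its length is maximum among
all paths in the graph. -/
def IsLongestPath {V : Type*} (G : SimpleGraph V) {u v : V} (p : G.Walk u v) : Prop :=
  p.IsPath ∧ ∀ ⦃a b : V⦄ (q : G.Walk a b), q.IsPath → q.length ≤ p.length

/-! ### Rerouting a longest path -/

lemma exists_getVert_of_mem_take {V : Type*} {G : SimpleGraph V} {a b : V} (P : G.Walk a b)
    {i : ℕ} {z : V} (hz : z ∈ (P.take i).support) : ∃ s, s ≤ i ∧ s ≤ P.length ∧ P.getVert s = z := by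
  obtain ⟨s, hs, hs'⟩ := Walk.mem_support_iff_exists_getVert.1 hz
  rw [Walk.take_getVert] at hs
  rw [Walk.take_length] at hs'
  exact ⟨i ⊓ s, by omega, by omega, hs⟩

lemma exists_getVert_of_mem_drop {V : Type*} {G : SimpleGraph V} {a b : V} (P : G.Walk a b)
    {j : ℕ} (hj : j ≤ P.length) {z : V} (hz : z ∈ (P.drop j).support) :
    ∃ s, j ≤ s ∧ s ≤ P.length ∧ P.getVert s = z := by
  obtain ⟨s, hs, hs'⟩ := Walk.mem_support_iff_exists_getVert.1 hz
  rw [Walk.drop_getVert] at hs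
  rw [Walk.drop_length] at hs'
  exact ⟨j + s, by omega, by omega, hs⟩

/-- Replacing the segment of a longest path between positions `i < j` by a detour through a path
`w` that avoids it cannot produce a longer path. -/
lemma detour_le {V : Type*} {G : SimpleGraph V} {a b : V} {P : G.Walk a b}
    (hP : IsLongestPath G P) {x y : V} (w : G.Walk x y) (hw : w.IsPath)
    (hoff : ∀ z ∈ w.support, z ∉ P.support) {i j : ℕ} (hij : i < j) (hj : j ≤ P.length)
    (hx : G.Adj x (P.getVert i)) (hy : G.Adj y (P.getVert j)) : i + 2 + w.length ≤ j := by
  have hpath : ((P.take i).append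
      (Walk.cons hx.symm (w.append (Walk.cons hy (P.drop j))))).IsPath := by
    rw [Walk.isPath_def, Walk.support_append, Walk.support_cons, List.tail_cons,
      Walk.support_append, Walk.support_cons, List.tail_cons, List.nodup_append, List.nodup_append]
    refine ⟨(hP.1.take i).support_nodup, ⟨hw.support_nodup, (hP.1.drop j).support_nodup, ?_⟩, ?_⟩
    · rintro z hz z' hz' rfl
      obtain ⟨s, -, -, rfl⟩ := exists_getVert_of_mem_drop P hj hz'
      exact hoff _ hz (P.getVert_mem_support s)
    · rintro z hz z' hz' rfl
      obtain ⟨s, hs, hs', rfl⟩ := exists_getVert_of_mem_take P hz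
      rcases List.mem_append.1 hz' with h | h
      · exact hoff _ h (P.getVert_mem_support s)
      · obtain ⟨t, ht, ht', hst⟩ := exists_getVert_of_mem_drop P hj h
        have := hP.1.getVert_injOn ht' hs' hst
        omega
  have := hP.2 _ hpath
  simp only [Walk.length_append, Walk.length_cons, Walk.take_length, Walk.drop_length] at this
  omega

/-- A vertex off a longest path is not adjacent to either end of the path. -/
lemma interior_of_adj {V : Type*} {G : SimpleGraph V} {a b : V} {P : G.Walk a b}
    (hP : IsLongestPath G P) {x : V} (hx : x ∉ P.support) {i : ℕ} (hi : i ≤ P.length)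
    (hadj : G.Adj x (P.getVert i)) : 1 ≤ i ∧ i + 1 ≤ P.length := by
  constructor
  · by_contra h
    obtain rfl : i = 0 := by omega
    rw [Walk.getVert_zero] at hadj
    have := hP.2 (Walk.cons hadj P) (hP.1.cons hx)
    simp at this
  · by_contra h
    obtain rfl : i = P.length := by omega
    rw [Walk.getVert_length] at hadj
    have := hP.2 (P.concat hadj.symm) (hP.1.concat hx _)
    simp at this

/-- `H` behaves like a connected component of `G - V(P)`, as far as its attachments to the longest
path `P` are concerned: every edge leaving `H` ends in an interior vertex of `P`, two attachment
positions differ by at least `2`, and by at least `3` when they are witnessed by distinct vertices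
of `H`. -/
structure Detached {V : Type*} (G : SimpleGraph V) {a b : V} (P : G.Walk a b) (H : Finset V) :
    Prop where
  off : ∀ x ∈ H, x ∉ P.support
  closed : ∀ x ∈ H, ∀ y, G.Adj x y → y ∈ H ∨ y ∈ P.support
  interior : ∀ x ∈ H, ∀ i ≤ P.length, G.Adj x (P.getVert i) → 1 ≤ i ∧ i + 1 ≤ P.length
  gap : ∀ x ∈ H, ∀ y ∈ H, ∀ i j, i < j → j ≤ P.length →
    G.Adj x (P.getVert i) → G.Adj y (P.getVert j) → i + 2 ≤ j ∧ (x ≠ y → i + 3 ≤ j)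

/-- The component of `G - V(P)` containing `u` is detached. -/
lemma exists_detached {V : Type*} [Fintype V] {G : SimpleGraph V} {a b : V} {P : G.Walk a b}
    (hP : IsLongestPath G P) {u : V} (hu : u ∉ P.support) :
    ∃ H : Finset V, u ∈ H ∧ Detached G P H := by
  classical
  let H : Finset V := Finset.univ.filter
    (fun x => ∃ w : G.Walk u x, ∀ z ∈ w.support, z ∉ P.support)
  have hH : ∀ x, x ∈ H ↔ ∃ w : G.Walk u x, ∀ z ∈ w.support, z ∉ P.support := fun x => by
    simp [H]
  have hoff : ∀ x ∈ H, x ∉ P.support := fun x hx => by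
    obtain ⟨w, hw⟩ := (hH x).1 hx
    exact hw x w.end_mem_support
  refine ⟨H, (hH u).2 ⟨Walk.nil, by simpa using hu⟩, hoff, ?_, ?_, ?_⟩
  · intro x hx y hxy
    by_contra! h
    obtain ⟨w, hw⟩ := (hH x).1 hx
    refine h.1 ((hH y).2 ⟨w.concat hxy, ?_⟩)
    intro z hz
    rw [Walk.support_concat] at hz
    rcases List.mem_append.1 hz with hz | hz
    · exact hw z hz
    · rw [List.mem_singleton.1 hz]
      exact h.2
  · intro x hx i hi hadj
    exact interior_of_adj hP (hoff x hx) hi hadj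
  · intro x hx y hy i j hij hj hxi hyj
    obtain ⟨w, hw⟩ := (hH x).1 hx
    obtain ⟨w', hw'⟩ := (hH y).1 hy
    have key := detour_le hP (w.reverse.append w').bypass (Walk.bypass_isPath _) (by
      intro z hz
      have := Walk.support_bypass_subset_support _ hz
      rcases (Walk.mem_support_append_iff _ _).1 this with h | h
      · exact hw z (by simpa using h)
      · exact hw' z h) hij hj hxi hyj
    refine ⟨by omega, fun hne => ?_⟩
    have : (w.reverse.append w').bypass.length ≠ 0 := fun h => hne (Walk.eq_of_length_eq_zero h)
    omega

/-! ### Separation in `k`-connected graphs -/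

/-- In a `k`-connected graph, a set that is closed under adjacency outside a set `S` of fewer than
`k` vertices, and that meets the complement of `S`, contains the complement of `S`. -/
lemma mem_of_closed_off {V : Type*} [Fintype V] {G : SimpleGraph V} {k : ℕ} (hG : IsKConnected G k)
    {S H : Finset V} (hS : S.card < k)
    (hcl : ∀ x ∈ H, x ∉ S → ∀ y, y ∉ S → G.Adj x y → y ∈ H)
    {x z : V} (hx : x ∈ H) (hxS : x ∉ S) (hzS : z ∉ S) : z ∈ H := by
  have hconn := (hG.2 S hS).preconnected ⟨x, by simpa using hxS⟩ ⟨z, by simpa using hzS⟩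
  have main : ∀ (p q : ((↑S : Set V)ᶜ : Set V)), (G.induce ((↑S : Set V)ᶜ)).Walk p q →
      (p : V) ∈ H → (q : V) ∈ H := by
    intro p q w
    induction w with
    | nil => exact id
    | @cons p r q h w ih =>
      intro hp
      exact ih (hcl p hp (fun h => p.2 (Finset.mem_coe.2 h)) r
        (fun h => r.2 (Finset.mem_coe.2 h)) (by simpa using h))
  obtain ⟨w⟩ := hconn
  exact main _ _ w hx

/-- The minimum degree of a `k`-connected graph is at least `k`. -/
lemma le_card_neighbors {V : Type*} [Fintype V] {G : SimpleGraph V} {k : ℕ}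
    (hG : IsKConnected G k) (x : V) {N : Finset V} (hN : ∀ y, G.Adj x y → y ∈ N) :
    k ≤ N.card := by
  classical
  by_contra! h
  have h1 : (insert x (N.erase x)).card < Fintype.card V := by
    have h2 := Finset.card_insert_le x (N.erase x)
    have h3 := Finset.card_erase_le (s := N) (a := x)
    have := hG.1
    omega
  obtain ⟨z, hz⟩ : ∃ z, z ∉ insert x (N.erase x) := by
    by_contra! hall
    rw [Finset.eq_univ_iff_forall.2 hall, Finset.card_univ] at h1
    omega
  simp only [Finset.mem_insert, not_or] at hz
  have := mem_of_closed_off hG (S := N.erase x) (H := {x}) (x := x) (z := z)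
    (lt_of_le_of_lt (Finset.card_erase_le) h) (by
      intro y hy _ y' hy' hadj
      rw [Finset.mem_singleton] at hy
      subst hy
      exact (hy' (Finset.mem_erase.2 ⟨hadj.ne', hN _ hadj⟩)).elim) (by simp) (by simp) hz.2
  exact hz.1 (by simpa using this)

/-! ### Counting attachment positions -/

/-- The positions on `P` of the vertices having a neighbour in `H`. -/
noncomputable def attach {V : Type*} (G : SimpleGraph V) {a b : V} (P : G.Walk a b)
    (H : Finset V) : Finset ℕ := by
  classical exact (Finset.range (P.length + 1)).filter (fun i => ∃ x ∈ H, G.Adj x (P.getVert i))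

lemma mem_attach {V : Type*} {G : SimpleGraph V} {a b : V} {P : G.Walk a b} {H : Finset V}
    {i : ℕ} : i ∈ attach G P H ↔ i ≤ P.length ∧ ∃ x ∈ H, G.Adj x (P.getVert i) := by
  simp [attach]

/-- The attachment positions `i` such that `i + 2` is not an attachment position. -/
noncomputable def attachEnd {V : Type*} (G : SimpleGraph V) {a b : V} (P : G.Walk a b)
    (H : Finset V) : Finset ℕ :=
  (attach G P H).filter (fun i => i + 2 ∉ attach G P H)

/-- If `A` is the set of attachment positions and `B ⊆ A` the set of those `i` with `i + 2 ∉ A`,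
then `A`, `A + 1` and `B + 2` are pairwise disjoint subsets of `{1, …, ℓ + 1}`, where `ℓ` is the
length of `P`. -/
lemma Detached.count {V : Type*} {G : SimpleGraph V} {a b : V} {P : G.Walk a b} {H : Finset V}
    (hH : Detached G P H) :
    2 * (attach G P H).card + (attachEnd G P H).card ≤ P.length + 1 := by
  classical
  set A := attach G P H with hA
  set B := attachEnd G P H with hB
  have hB' : ∀ i, i ∈ B ↔ i ∈ A ∧ i + 2 ∉ A := fun i => by simp [hB, hA, attachEnd]
  have hint : ∀ i ∈ A, 1 ≤ i ∧ i + 1 ≤ P.length := fun i hi => by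
    obtain ⟨h1, x, hx, h2⟩ := mem_attach.1 hi
    exact hH.interior x hx i h1 h2
  have hgap : ∀ i ∈ A, i + 1 ∉ A := fun i hi hi' => by
    obtain ⟨h1, x, hx, h2⟩ := mem_attach.1 hi
    obtain ⟨h1', y, hy, h2'⟩ := mem_attach.1 hi'
    have := (hH.gap x hx y hy i (i + 1) (by omega) h1' h2 h2').1
    omega
  have c1 : (A.image (· + 1)).card = A.card :=
    Finset.card_image_of_injective _ (add_left_injective 1)
  have c2 : (B.image (· + 2)).card = B.card :=
    Finset.card_image_of_injective _ (add_left_injective 2)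
  have d1 : Disjoint A (A.image (· + 1)) := by
    rw [Finset.disjoint_left]
    intro i hi hi'
    obtain ⟨j, hj, rfl⟩ := Finset.mem_image.1 hi'
    exact hgap j hj hi
  have d2 : Disjoint (A ∪ A.image (· + 1)) (B.image (· + 2)) := by
    rw [Finset.disjoint_left]
    intro i hi hi'
    obtain ⟨j, hj, rfl⟩ := Finset.mem_image.1 hi'
    rcases Finset.mem_union.1 hi with h | h
    · exact ((hB' j).1 hj).2 h
    · obtain ⟨s, hs, hsj⟩ := Finset.mem_image.1 h
      obtain rfl : s = j + 1 := by omega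
      exact hgap j ((hB' j).1 hj).1 hs
  have hsub : (A ∪ A.image (· + 1)) ∪ B.image (· + 2) ⊆ Finset.Icc 1 (P.length + 1) := by
    intro i hi
    simp only [Finset.mem_union, Finset.mem_image] at hi
    rw [Finset.mem_Icc]
    rcases hi with (h | ⟨j, hj, rfl⟩) | ⟨j, hj, rfl⟩
    · have := hint i h
      omega
    · have := hint j hj
      omega
    · have := hint j ((hB' j).1 hj).1
      omega
  have := Finset.card_le_card hsub
  rw [Finset.card_union_of_disjoint d2, Finset.card_union_of_disjoint d1, c1, c2,
    Nat.card_Icc] at this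
  omega

lemma Detached.getVert_zero_notMem {V : Type*} {G : SimpleGraph V} {a b : V} {P : G.Walk a b}
    {H : Finset V} (hP : P.IsPath) (hH : Detached G P H) {i : ℕ} (hi : i ∈ attach G P H) :
    P.getVert i ≠ a := by
  intro h
  obtain ⟨h1, x, hx, h2⟩ := mem_attach.1 hi
  have := (hH.interior x hx i h1 h2).1
  rw [hP.getVert_eq_start_iff h1] at h
  omega

/-- The attachment vertices of `H` separate `H` from the first vertex of `P`. -/
lemma Detached.le_card_attach {V : Type*} [Fintype V] {G : SimpleGraph V} {k : ℕ}
    (hG : IsKConnected G k) {a b : V} {P : G.Walk a b} {H : Finset V} (hP : P.IsPath)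
    (hH : Detached G P H) (hne : H.Nonempty) : k ≤ (attach G P H).card := by
  classical
  by_contra! h
  obtain ⟨u, hu⟩ := hne
  have hmem : ∀ z ∈ (attach G P H).image P.getVert, z ∈ P.support := by
    intro z hz
    obtain ⟨i, -, rfl⟩ := Finset.mem_image.1 hz
    exact P.getVert_mem_support i
  refine hH.off a ?_ P.start_mem_support
  refine mem_of_closed_off hG (S := (attach G P H).image P.getVert) (x := u)
    (lt_of_le_of_lt Finset.card_image_le h) ?_ hu (fun h => hH.off u hu (hmem u h)) ?_
  · intro x hx _ y hy hxy
    refine (hH.closed x hx y hxy).resolve_right fun hyP => hy ?_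
    obtain ⟨i, rfl, hi⟩ := Walk.mem_support_iff_exists_getVert.1 hyP
    exact Finset.mem_image_of_mem _ (mem_attach.2 ⟨hi, x, hx, hxy⟩)
  · intro h
    obtain ⟨i, hi, hia⟩ := Finset.mem_image.1 h
    exact hH.getVert_zero_notMem hP hi hia

/-! ### The lower bound `3k` on the order of a longest path -/

/-- If a path `P` in a `k`-connected graph has a detached set `H` with at least two vertices, then
`P` has at least `3k` vertices.

Let `A` be the attachment positions of `H` and `B` those `i ∈ A` with
`i + 2 ∉ A`. When `|B| ≥ k`, counting positions suffices. Otherwise choose for each `i ∈ B` the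
unique neighbour of `P i` in `H` if it is unique, and `P i` itself otherwise. The chosen set `T`
covers all edges between `H` and `P`, since positions `i`, `i + 2` in `A` have the same unique
neighbour in `H`. As `|T| < k`, it cannot separate, so `H ⊆ T`. Then every vertex of `H` has many
private attachments because its degree is at least `k`, which makes `A` large. -/
lemma Detached.three_mul_le {V : Type*} [Fintype V] {G : SimpleGraph V} {k : ℕ}
    (hG : IsKConnected G k) {a b : V} {P : G.Walk a b} {H : Finset V} (hP : P.IsPath)
    (hH : Detached G P H) (hne : 2 ≤ H.card) : 3 * k ≤ P.length + 1 := by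
  classical
  have hcount := hH.count
  set A := attach G P H with hA
  set B := attachEnd G P H with hB
  have hB' : ∀ i, i ∈ B ↔ i ∈ A ∧ i + 2 ∉ A := fun i => by simp [hB, hA, attachEnd]
  have hBA : B ⊆ A := fun i hi => ((hB' i).1 hi).1
  have hAle : ∀ i ∈ A, i ≤ P.length := fun i hi => (mem_attach.1 hi).1
  rcases le_or_gt k B.card with hk | hk
  · have := Finset.card_le_card hBA
    omega
  have hg : ∀ i, ∃ t, i ∈ A → ((t ∈ H ∧ ∀ y ∈ H, G.Adj y (P.getVert i) → y = t) ∨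
      (t = P.getVert i ∧ ∀ x, ∃ y ∈ H, y ≠ x ∧ G.Adj y (P.getVert i))) := by
    intro i
    by_cases h : ∃ t ∈ H, ∀ y ∈ H, G.Adj y (P.getVert i) → y = t
    · obtain ⟨t, h1, h2⟩ := h
      exact ⟨t, fun _ => Or.inl ⟨h1, h2⟩⟩
    · refine ⟨P.getVert i, fun hi => Or.inr ⟨rfl, fun x => ?_⟩⟩
      push Not at h
      by_cases hx : x ∈ H
      · obtain ⟨y, hy, h1, h2⟩ := h x hx
        exact ⟨y, hy, h2, h1⟩
      · obtain ⟨-, y, hy, h1⟩ := mem_attach.1 hi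
        exact ⟨y, hy, fun h => hx (h ▸ hy), h1⟩
  choose g hg using hg
  set T := B.image g with hT
  have hTcard : T.card ≤ B.card := Finset.card_image_le
  -- Downward induction on `i`: an edge from `H \ T` to `P` ends in `T`.
  have cover : ∀ m i, P.length - i ≤ m → ∀ x ∈ H, x ∉ T → i ≤ P.length →
      G.Adj x (P.getVert i) → P.getVert i ∈ T ∧ ∃ y ∈ H, y ≠ x ∧ G.Adj y (P.getVert i) := by
    intro m
    induction m with
    | zero =>
      intro i hm x hx _ hi hadj
      have := hH.interior x hx i hi hadj
      omega
    | succ m ih =>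
      intro i hm x hx hxT hi hadj
      have hiA : i ∈ A := mem_attach.2 ⟨hi, x, hx, hadj⟩
      by_cases hiB : i ∈ B
      · have hgT : g i ∈ T := Finset.mem_image_of_mem g hiB
        rcases hg i hiA with ⟨_, h2⟩ | ⟨h1, h2⟩
        · exact (hxT (by rw [h2 x hx hadj]; exact hgT)).elim
        · exact ⟨h1 ▸ hgT, h2 x⟩
      · have hi2 : i + 2 ∈ A := by
          by_contra h
          exact hiB ((hB' i).2 ⟨hiA, h⟩)
        obtain ⟨hi2', y, hy, hyadj⟩ := mem_attach.1 hi2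
        have hall : ∀ z ∈ H, G.Adj z (P.getVert (i + 2)) → z = x := by
          intro z hz hzadj
          by_contra hne
          have := (hH.gap x hx z hz i (i + 2) (by omega) hi2' hadj hzadj).2 (Ne.symm hne)
          omega
        have hyx := hall y hy hyadj
        subst hyx
        obtain ⟨-, z, hz, hzy, hzadj⟩ := ih (i + 2) (by omega) y hy hxT hi2' hyadj
        exact (hzy (hall z hz hzadj)).elim
  have haT : a ∉ T := by
    intro h
    obtain ⟨i, hi, hia⟩ := Finset.mem_image.1 h
    rcases hg i (hBA hi) with ⟨h1, -⟩ | ⟨h1, -⟩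
    · exact hH.off a (hia ▸ h1) P.start_mem_support
    · exact hH.getVert_zero_notMem hP (hBA hi) (h1.symm.trans hia)
  have hHT : H ⊆ T := by
    intro u hu
    by_contra huT
    refine hH.off a ?_ P.start_mem_support
    refine mem_of_closed_off hG (S := T) (by omega) ?_ hu huT haT
    intro x hx hxT y hyT hxy
    refine (hH.closed x hx y hxy).resolve_right fun hyP => hyT ?_
    obtain ⟨i, rfl, hi⟩ := Walk.mem_support_iff_exists_getVert.1 hyP
    exact (cover _ i le_rfl x hx hxT hi hxy).1
  -- `C` is the set of attachment positions with at least two neighbours in `H`, and `D x` the set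
  -- of those whose only neighbour in `H` is `x`.
  let C := A.filter (fun i => ∀ x, ∃ y ∈ H, y ≠ x ∧ G.Adj y (P.getVert i))
  let D : V → Finset ℕ := fun x => A.filter
    (fun i => G.Adj x (P.getVert i) ∧ ∀ y ∈ H, G.Adj y (P.getVert i) → y = x)
  have hCT : C.image P.getVert ⊆ T := by
    intro z hz
    obtain ⟨i, hi, rfl⟩ := Finset.mem_image.1 hz
    obtain ⟨hiA, hiC⟩ := Finset.mem_filter.1 hi
    have hiB : i ∈ B := by
      refine (hB' i).2 ⟨hiA, fun h => ?_⟩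
      obtain ⟨hi2', y, hy, hyadj⟩ := mem_attach.1 h
      obtain ⟨z, hz, hzy, hzadj⟩ := hiC y
      have := (hH.gap z hz y hy i (i + 2) (by omega) hi2' hzadj hyadj).2 hzy
      omega
    rcases hg i hiA with ⟨-, h1⟩ | ⟨h1, -⟩
    · obtain ⟨z, hz, hzy, hzadj⟩ := hiC (g i)
      exact (hzy (h1 z hz hzadj)).elim
    · exact h1 ▸ Finset.mem_image_of_mem g hiB
  have hCcard : (C.image P.getVert).card = C.card := by
    refine Finset.card_image_of_injOn fun i hi j hj hij => ?_
    exact hP.getVert_injOn (hAle i (Finset.mem_filter.1 hi).1)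
      (hAle j (Finset.mem_filter.1 hj).1) hij
  have hHC : H.card + C.card ≤ B.card := by
    have hdisj : Disjoint H (C.image P.getVert) := by
      rw [Finset.disjoint_left]
      intro x hx hx'
      obtain ⟨i, -, rfl⟩ := Finset.mem_image.1 hx'
      exact hH.off _ hx (P.getVert_mem_support i)
    have := Finset.card_le_card (Finset.union_subset hHT hCT)
    rw [Finset.card_union_of_disjoint hdisj, hCcard] at this
    omega
  have hD : ∀ x ∈ H, k + 1 ≤ H.card + C.card + (D x).card := by
    intro x hx
    have h1 := le_card_neighbors hG x
      (N := H.erase x ∪ (C.image P.getVert ∪ (D x).image P.getVert)) (by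
        intro y hxy
        rcases hH.closed x hx y hxy with hy | hy
        · exact Finset.mem_union_left _ (Finset.mem_erase.2 ⟨hxy.ne', hy⟩)
        · refine Finset.mem_union_right _ ?_
          obtain ⟨i, rfl, hi⟩ := Walk.mem_support_iff_exists_getVert.1 hy
          have hiA : i ∈ A := mem_attach.2 ⟨hi, x, hx, hxy⟩
          by_cases h : ∀ y ∈ H, G.Adj y (P.getVert i) → y = x
          · exact Finset.mem_union_right _ (Finset.mem_image_of_mem _
              (Finset.mem_filter.2 ⟨hiA, hxy, h⟩))
          · refine Finset.mem_union_left _ (Finset.mem_image_of_mem _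
              (Finset.mem_filter.2 ⟨hiA, fun z => ?_⟩))
            push Not at h
            obtain ⟨y, hy, hyadj, hyx⟩ := h
            by_cases hz : z = x
            · exact ⟨y, hy, hz ▸ hyx, hyadj⟩
            · exact ⟨x, hx, Ne.symm hz, hxy⟩)
    have h2 := Finset.card_union_le (H.erase x) (C.image P.getVert ∪ (D x).image P.getVert)
    have h3 := Finset.card_union_le (C.image P.getVert) ((D x).image P.getVert)
    have h4 : ((D x).image P.getVert).card ≤ (D x).card := Finset.card_image_le
    rw [Finset.card_erase_of_mem hx] at h2
    omega
  have hAcard : C.card + ∑ x ∈ H, (D x).card ≤ A.card := by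
    have hpd : (H : Set V).PairwiseDisjoint D := by
      intro x hx y hy hxy
      rw [Function.onFun, Finset.disjoint_left]
      intro i hi hi'
      exact hxy ((Finset.mem_filter.1 hi').2.2 x hx (Finset.mem_filter.1 hi).2.1)
    have hd : Disjoint C (H.biUnion D) := by
      rw [Finset.disjoint_left]
      intro i hi hi'
      obtain ⟨x, hx, hxi⟩ := Finset.mem_biUnion.1 hi'
      obtain ⟨y, hy, hyx, hyadj⟩ := (Finset.mem_filter.1 hi).2 x
      exact hyx ((Finset.mem_filter.1 hxi).2.2 y hy hyadj)
    rw [← Finset.card_biUnion hpd, ← Finset.card_union_of_disjoint hd]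
    refine Finset.card_le_card (Finset.union_subset (Finset.filter_subset _ _) ?_)
    exact Finset.biUnion_subset.2 fun x _ => Finset.filter_subset _ _
  obtain ⟨q, hq⟩ : ∃ q, k = H.card + C.card + q := ⟨k - (H.card + C.card), by omega⟩
  have hsum : H.card * (q + 1) ≤ ∑ x ∈ H, (D x).card := by
    rw [← smul_eq_mul]
    refine Finset.card_nsmul_le_sum H _ _ fun x hx => ?_
    have := hD x hx
    omega
  have hprod : 2 * q + H.card ≤ H.card * (q + 1) := by nlinarith
  omega

/-! ### Two longest paths -/

theorem stmt_3 {V : Type*} [Fintype V] (G : SimpleGraph V) (k n : ℕ)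
    (hn : Fintype.card V = n) (hnk : n ≤ 5 * k - 2) (hG : IsKConnected G k)
    {a b c d : V} (P : G.Walk a b) (Q : G.Walk c d)
    (hP : IsLongestPath G P) (hQ : IsLongestPath G Q) :
    k ≤ ({v | v ∈ P.support} ∩ {v | v ∈ Q.support}).ncard := by
  classical
  have hset : ({v | v ∈ P.support} ∩ {v | v ∈ Q.support} : Set V) =
      ((P.support.toFinset ∩ Q.support.toFinset : Finset V) : Set V) := by
    ext v
    simp
  rw [hset, Set.ncard_coe_finset]
  have hlen : P.length = Q.length := le_antisymm (hQ.2 P hP.1) (hP.2 Q hQ.1)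
  have hcP : P.support.toFinset.card = P.length + 1 := by
    rw [List.toFinset_card_of_nodup hP.1.support_nodup, Walk.length_support]
  have hcQ : Q.support.toFinset.card = Q.length + 1 := by
    rw [List.toFinset_card_of_nodup hQ.1.support_nodup, Walk.length_support]
  have hunion := Finset.card_union_add_card_inter P.support.toFinset Q.support.toFinset
  have hle : (P.support.toFinset ∪ Q.support.toFinset).card ≤ n := hn ▸ Finset.card_le_univ _
  by_contra! hm
  have hkn := hG.1
  obtain ⟨u, hu⟩ : ∃ u, u ∉ P.support := by
    by_contra! hall
    have h1 : P.support.toFinset = Finset.univ := Finset.eq_univ_iff_forall.2 (by simpa using hall)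
    have h2 := hcP
    rw [h1, Finset.card_univ] at h2
    rw [h1, Finset.univ_inter] at hm
    omega
  have h2k : 2 * k ≤ P.length + 1 := by
    obtain ⟨H, huH, hH⟩ := exists_detached hP hu
    have h1 := hH.le_card_attach hG hP.1 ⟨u, huH⟩
    have h2 := hH.count
    omega
  -- More than half of the vertices of `Q` are off `P`, so two of them are consecutive on `Q`.
  obtain ⟨i, hi, hi1, hi2⟩ : ∃ i < Q.length, Q.getVert i ∉ P.support ∧
      Q.getVert (i + 1) ∉ P.support := by
    by_contra! hno
    let D := (Finset.range (Q.length + 1)).filter (fun i => Q.getVert i ∉ P.support)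
    have hD : ∀ i, i ∈ D ↔ i < Q.length + 1 ∧ Q.getVert i ∉ P.support := fun i => by simp [D]
    have hdisj : Disjoint D (D.image (· + 1)) := by
      rw [Finset.disjoint_left]
      intro i hi hi'
      obtain ⟨j, hj, rfl⟩ := Finset.mem_image.1 hi'
      have h1 := (hD _).1 hi
      exact h1.2 (hno j (by omega) ((hD j).1 hj).2)
    have hsub : D ∪ D.image (· + 1) ⊆ Finset.range (Q.length + 2) := by
      intro i hi
      rw [Finset.mem_range]
      rcases Finset.mem_union.1 hi with h | h
      · have := ((hD i).1 h).1
        omega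
      · obtain ⟨j, hj, rfl⟩ := Finset.mem_image.1 h
        have := ((hD j).1 hj).1
        omega
    have h1 := Finset.card_le_card hsub
    rw [Finset.card_union_of_disjoint hdisj, Finset.card_range,
      Finset.card_image_of_injective _ (add_left_injective 1)] at h1
    have hcover : Q.support.toFinset ⊆
        (P.support.toFinset ∩ Q.support.toFinset) ∪ D.image Q.getVert := by
      intro v hv
      rw [List.mem_toFinset] at hv
      by_cases hvP : v ∈ P.support
      · exact Finset.mem_union_left _ (by simp [hv, hvP])
      · obtain ⟨i, rfl, hi⟩ := Walk.mem_support_iff_exists_getVert.1 hv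
        exact Finset.mem_union_right _ (Finset.mem_image_of_mem _ ((hD i).2 ⟨by omega, hvP⟩))
    have h2 := Finset.card_le_card hcover
    have h3 := Finset.card_union_le (P.support.toFinset ∩ Q.support.toFinset) (D.image Q.getVert)
    have h4 : (D.image Q.getVert).card ≤ D.card := Finset.card_image_le
    omega
  have h3k : 3 * k ≤ P.length + 1 := by
    obtain ⟨H, hiH, hH⟩ := exists_detached hP hi1
    have hadj := Q.adj_getVert_succ hi
    have hiH' := (hH.closed _ hiH _ hadj).resolve_right hi2
    refine hH.three_mul_le hG hP.1 ?_
    exact Finset.one_lt_card.2 ⟨_, hiH, _, hiH', hadj.ne⟩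
  omega
end

section
/- Let G be a k-connected finite simple graph and let P and Q be longest paths in G. If |V(P) ∩ V(Q)| ≤ k − 1, then there exists a longest path Q' in G with vertex sequence q'_0 q'_1 ⋯ q'_ℓ such that V(Q') = V(Q), and there exists an index i with q'_0 ∉ V(P), q'_i ∉ V(P), q'_i adjacent to q'_0 in G, and either i = 1, or 2 ≤ i ≤ ℓ − 1 and q'_0 q'_{i+1} is an edge of G. -/
/-!
Write `S = V(P) ∩ V(Q)`, call the vertices of `S` marked, and let `q₀ … q_ℓ` be a longest path with
vertex set `V(Q)`.  All neighbours of an end of such a path lie on it, and `k`-connectedness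
gives at least `k > |S|` of them.

If `q₀ ~ q_j`, then the rotation `q_{j-1} … q₀ q_j … q_ℓ` is again a longest path on `V(Q)`.
The `k` possible initial vertices `q_{j-1}` are distinct, so one of them is unmarked; doing this at
both ends, both `q₀` and `q_ℓ` may be taken to be unmarked.

Suppose that no longest path on `V(Q)` has the required property. By reversal `q_{ℓ-1}` is marked,
and `q₀ ≁ q_ℓ` since otherwise the rotation `q₀ q_ℓ q_{ℓ-1} … q₁` would do. If `q₀ ~ q_j` with
`j ≥ 2`, then the rotation at `j` shows that `q_{j-1}` or `q_{j-2}` is marked. Send `j` to `q_{j-1}`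
if this is marked and to `q_{j-2}` otherwise. This is injective: a collision gives
`q₀ ~ q_i, q_{i+1}` with `q_i` unmarked. It misses `q_{ℓ-1}`. So `q₀` has at most
`1 + (|S| - 1) < k` neighbours, a contradiction.
-/

open SimpleGraph


/-- The sequence `f 0, …, f ℓ` is a path of `G` with vertex set `T`; the values of `f` beyond `ℓ`
are irrelevant. -/
structure SpanSeq {V : Type*} (G : SimpleGraph V) (T : Set V) (l : ℕ) (f : ℕ → V) : Prop where
  inj : ∀ i ≤ l, ∀ j ≤ l, f i = f j → i = j
  adj : ∀ i < l, G.Adj (f i) (f (i + 1))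
  mem : ∀ i ≤ l, f i ∈ T
  surj : ∀ v ∈ T, ∃ i ≤ l, f i = v

/-- The property required of the path in the theorem, with `S` in the role of the vertex set
of `P`. -/
def GoodSeq {V : Type*} (G : SimpleGraph V) (S : Set V) (l : ℕ) (f : ℕ → V) : Prop :=
  ∃ i : ℕ, i ≤ l ∧ f 0 ∉ S ∧ f i ∉ S ∧ G.Adj (f 0) (f i) ∧
    (i = 1 ∨ (2 ≤ i ∧ i ≤ l - 1 ∧ G.Adj (f 0) (f (i + 1))))

/-- The rotation `f (j-1), …, f 0, f j, f (j+1), …`. -/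
def rotSeq {V : Type*} (f : ℕ → V) (j : ℕ) : ℕ → V :=
  fun i => if i < j then f (j - 1 - i) else f i

section

variable {V : Type*} {G : SimpleGraph V} {T : Set V} {l : ℕ} {f : ℕ → V}

theorem SpanSeq.rev (h : SpanSeq G T l f) : SpanSeq G T l (fun i => f (l - i)) where
  inj i hi j hj e := by
    have := h.inj _ (by omega) _ (by omega) e
    omega
  adj i hi := by
    have := (h.adj (l - (i + 1)) (by omega)).symm
    rwa [show l - (i + 1) + 1 = l - i by omega] at this
  mem i hi := h.mem _ (by omega)
  surj v hv := by
    obtain ⟨i, hi, rfl⟩ := h.surj v hv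
    exact ⟨l - i, by omega, by simp only [show l - (l - i) = i by omega]⟩

theorem SpanSeq.rot (h : SpanSeq G T l f) {j : ℕ} (hj : j ≤ l)
    (ha : G.Adj (f 0) (f j)) : SpanSeq G T l (rotSeq f j) where
  inj a ha b hb e := by
    unfold rotSeq at e
    split_ifs at e <;> have := h.inj _ (by omega) _ (by omega) e <;> omega
  adj i hi := by
    unfold rotSeq
    split_ifs with h2 h3 h3
    · have := (h.adj (j - 1 - (i + 1)) (by omega)).symm
      rwa [show j - 1 - (i + 1) + 1 = j - 1 - i by omega] at this
    · rwa [show j - 1 - i = 0 by omega, show i + 1 = j by omega]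
    · omega
    · exact h.adj i hi
  mem i hi := by
    unfold rotSeq
    split_ifs <;> exact h.mem _ (by omega)
  surj v hv := by
    obtain ⟨i, hi, rfl⟩ := h.surj v hv
    by_cases hij : i < j
    · refine ⟨j - 1 - i, by omega, ?_⟩
      unfold rotSeq
      rw [if_pos (by omega), show j - 1 - (j - 1 - i) = i by omega]
    · exact ⟨i, hi, by unfold rotSeq; rw [if_neg hij]⟩

open Classical in
/-- The indices of the neighbours of the initial vertex. -/
noncomputable def nbrIdx (G : SimpleGraph V) (l : ℕ) (f : ℕ → V) : Finset ℕ :=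
  (Finset.Icc 1 l).filter fun j => G.Adj (f 0) (f j)

theorem mem_nbrIdx {j : ℕ} : j ∈ nbrIdx G l f ↔ (1 ≤ j ∧ j ≤ l) ∧ G.Adj (f 0) (f j) := by
  simp [nbrIdx]

theorem SpanSeq.le_card_nbrIdx [Fintype V] (h : SpanSeq G T l f) {k : ℕ}
    (hdeg : ∀ v, k ≤ (G.neighborSet v).ncard) (hmax : ∀ w, G.Adj (f 0) w → w ∈ T) :
    k ≤ (nbrIdx G l f).card := by
  classical
  refine (hdeg (f 0)).trans ?_
  have : G.neighborSet (f 0) ⊆ ↑((nbrIdx G l f).image f) := by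
    intro w hw
    obtain ⟨i, hi, rfl⟩ := h.surj w (hmax w hw)
    simp only [Finset.coe_image, Set.mem_image, Finset.mem_coe, mem_nbrIdx]
    refine ⟨i, ⟨⟨?_, hi⟩, hw⟩, rfl⟩
    by_contra h0
    obtain rfl : i = 0 := by omega
    exact G.loopless.irrefl _ hw
  calc _ ≤ _ := Set.ncard_le_ncard this (Set.toFinite _)
    _ = _ := Set.ncard_coe_finset _
    _ ≤ _ := Finset.card_image_le

variable [Fintype V] {S : Set V} {k : ℕ}

/-- A rotation makes the initial vertex unmarked without moving the final one. -/
theorem SpanSeq.exists_start (h : SpanSeq G T l f)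
    (hdeg : ∀ v, k ≤ (G.neighborSet v).ncard) (hmax : ∀ w, G.Adj (f 0) w → w ∈ T)
    (hS : (S ∩ T).ncard < k) :
    ∃ g, SpanSeq G T l g ∧ g 0 ∉ S ∧ g l = f l := by
  classical
  have hc := h.le_card_nbrIdx hdeg hmax
  by_contra hno
  have key : ∀ j ∈ nbrIdx G l f, f (j - 1) ∈ S := by
    intro j hj
    obtain ⟨⟨h1, h2⟩, h3⟩ := mem_nbrIdx.1 hj
    by_contra hs
    refine hno ⟨_, h.rot h2 h3, ?_, ?_⟩
    · unfold rotSeq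
      rw [if_pos (by omega)]
      simpa using hs
    · unfold rotSeq
      rw [if_neg (by omega)]
  have : (nbrIdx G l f).card ≤ (S ∩ T).toFinite.toFinset.card := by
    refine Finset.card_le_card_of_injOn (fun j => f (j - 1)) ?_ ?_
    · intro j hj
      have hj' := mem_nbrIdx.1 hj
      simpa using ⟨key j hj, h.mem _ (by omega)⟩
    · intro i hi j hj e
      have hi' := mem_nbrIdx.1 hi
      have hj' := mem_nbrIdx.1 hj
      have := h.inj _ (by omega) _ (by omega) e
      omega
  rw [← Set.ncard_eq_toFinset_card] at this
  omega

/-- The combinatorial core: only the degrees and the maximality of the path matter, and `S` is an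
arbitrary set of vertices meeting `T` in fewer than `k` vertices. -/
theorem exists_goodSeq (h : SpanSeq G T l f)
    (hdeg : ∀ v, k ≤ (G.neighborSet v).ncard)
    (hmax : ∀ g, SpanSeq G T l g → ∀ w, G.Adj (g 0) w → w ∈ T)
    (hS : (S ∩ T).ncard < k) :
    ∃ g, SpanSeq G T l g ∧ GoodSeq G S l g := by
  classical
  by_contra hno
  push Not at hno
  obtain ⟨g₁, hg₁, h0, -⟩ := h.exists_start hdeg (hmax _ h) hS
  obtain ⟨g₂, hg₂, h0', hl⟩ := hg₁.rev.exists_start hdeg (hmax _ hg₁.rev) hS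
  obtain ⟨q, hq, hq0, hql⟩ : ∃ q, SpanSeq G T l q ∧ q 0 ∉ S ∧ q l ∉ S :=
    ⟨_, hg₂.rev, by simpa [hl] using h0, by simpa using h0'⟩
  have hc := hq.le_card_nbrIdx hdeg (hmax _ hq)
  -- `l = 0` is impossible since the initial vertex has a neighbour on the path.
  have hl1 : 1 ≤ l := by
    by_contra hl0
    have : nbrIdx G l q = ∅ := by
      ext j
      simp only [mem_nbrIdx, Finset.notMem_empty, iff_false]
      omega
    rw [this, Finset.card_empty] at hc
    omega
  -- The first two vertices of a spanning path are never both unmarked.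
  have first : ∀ g, SpanSeq G T l g → g 0 ∉ S → g 1 ∈ S := by
    intro g hg h0
    by_contra h1
    exact hno g hg ⟨1, hl1, h0, h1, hg.adj 0 (by omega), Or.inl rfl⟩
  have hpen : q (l - 1) ∈ S := first _ hq.rev (by simpa using hql)
  have hnl : ¬ G.Adj (q 0) (q l) := by
    intro ha
    -- The cycle is opened between its two unmarked vertices `q 0` and `q l`.
    have hs := hq.rev.rot le_rfl (by simpa using ha.symm)
    have h3 := first _ hs.rev (by simpa [rotSeq] using hq0)
    have e : rotSeq (fun i => q (l - i)) l (l - 1) = q l := by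
      unfold rotSeq
      rw [if_pos (by omega)]
      simp
    exact hql (e ▸ h3)
  have back : ∀ j ∈ nbrIdx G l q, 2 ≤ j → q (j - 1) ∉ S → q (j - 2) ∈ S := by
    intro j hj h2 hs
    obtain ⟨⟨h1, hjl⟩, ha⟩ := mem_nbrIdx.1 hj
    have := first _ (hq.rot hjl ha) (by
      unfold rotSeq
      rw [if_pos (by omega)]
      simpa using hs)
    unfold rotSeq at this
    rwa [if_pos (by omega), show j - 1 - 1 = j - 2 by omega] at this
  have nocons : ∀ i, 2 ≤ i → i ∈ nbrIdx G l q → i + 1 ∈ nbrIdx G l q → q i ∈ S := by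
    intro i h2 hi hi'
    have a := mem_nbrIdx.1 hi
    have b := mem_nbrIdx.1 hi'
    by_contra hs
    exact hno q hq ⟨i, by omega, hq0, hs, a.2, Or.inr ⟨h2, by omega, b.2⟩⟩
  -- The index of the marked vertex to which the neighbour `q j` is charged.
  let φ : ℕ → ℕ := fun j => if q (j - 1) ∈ S then j - 1 else j - 2
  have hcard : ((nbrIdx G l q).erase 1).card ≤
      ((S ∩ T).toFinite.toFinset.erase (q (l - 1))).card := by
    refine Finset.card_le_card_of_injOn (fun j => q (φ j)) ?_ ?_
    · intro j hj
      obtain ⟨hj1, hj⟩ := Finset.mem_erase.1 hj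
      obtain ⟨⟨h1, hjl⟩, ha⟩ := mem_nbrIdx.1 hj
      have hjl' : j ≠ l := by
        rintro rfl
        exact hnl ha
      have hφ : q (φ j) ∈ S := by
        simp only [φ]
        split_ifs with hs
        · exact hs
        · exact back j hj (by omega) hs
      have hφj : φ j < l - 1 := by
        simp only [φ]
        split_ifs <;> omega
      simp only [Finset.coe_erase, Set.Finite.coe_toFinset, Set.mem_sdiff, Set.mem_inter_iff,
        Set.mem_singleton_iff]
      refine ⟨⟨hφ, hq.mem _ (by omega)⟩, fun e => ?_⟩
      have := hq.inj _ (by omega) _ (by omega) e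
      omega
    · intro i hi j hj e
      obtain ⟨hi1, hi⟩ := Finset.mem_erase.1 hi
      obtain ⟨hj1, hj⟩ := Finset.mem_erase.1 hj
      have hi' := mem_nbrIdx.1 hi
      have hj' := mem_nbrIdx.1 hj
      have hle : ∀ m, φ m ≤ m := by
        intro m
        simp only [φ]
        split_ifs <;> omega
      have e' : φ i = φ j :=
        hq.inj _ ((hle i).trans hi'.1.2) _ ((hle j).trans hj'.1.2) e
      simp only [φ] at e'
      split_ifs at e' with hs ht ht
      · omega
      · obtain rfl : j = i + 1 := by omega
        exact absurd (nocons i (by omega) hi hj) (by simpa using ht)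
      · obtain rfl : i = j + 1 := by omega
        exact absurd (nocons j (by omega) hj hi) (by simpa using hs)
      · omega
  have hmemS : q (l - 1) ∈ (S ∩ T).toFinite.toFinset := by
    simpa using ⟨hpen, hq.mem _ (by omega)⟩
  rw [Finset.card_erase_of_mem hmemS, ← Set.ncard_eq_toFinset_card] at hcard
  have hpos : 0 < (S ∩ T).ncard := by
    rw [Set.ncard_eq_toFinset_card]
    exact Finset.card_pos.2 ⟨_, hmemS⟩
  have := Finset.pred_card_le_card_erase (s := nbrIdx G l q) (a := 1)
  omega

end

/-- A vertex of degree less than `k` could be separated from some other vertex by deleting its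
neighbours. -/
theorem IsKConnected.le_ncard_neighborSet {V : Type*} [Fintype V] {G : SimpleGraph V} {k : ℕ}
    (hG : IsKConnected G k) (v : V) : k ≤ (G.neighborSet v).ncard := by
  classical
  by_contra hlt
  push Not at hlt
  obtain ⟨hk, hcon⟩ := hG
  have hN : (G.neighborFinset v).card < k := by
    rwa [← Set.ncard_coe_finset, coe_neighborFinset]
  have hex : ∃ w, w ∉ insert v (G.neighborFinset v) := by
    by_contra hall
    push Not at hall
    have := Finset.card_le_card (fun x (_ : x ∈ Finset.univ) => hall x)
    have h2 := Finset.card_insert_le v (G.neighborFinset v)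
    rw [Finset.card_univ] at this
    omega
  obtain ⟨w, hw⟩ := hex
  simp only [Finset.mem_insert, mem_neighborFinset, not_or] at hw
  obtain ⟨p⟩ := (hcon _ hN).preconnected ⟨v, by simp⟩ ⟨w, by simpa using hw.2⟩
  cases p with
  | nil => exact hw.1 rfl
  | cons h p =>
    rename_i x
    have h1 := x.2
    simp only [coe_neighborFinset, Set.mem_compl_iff, mem_neighborSet] at h1
    exact h1 h

theorem exists_walk_of_seq {V : Type*} {G : SimpleGraph V} (l : ℕ) (f : ℕ → V)
    (h : ∀ i < l, G.Adj (f i) (f (i + 1))) :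
    ∃ p : G.Walk (f 0) (f l), p.length = l ∧ ∀ i ≤ l, p.getVert i = f i := by
  induction l generalizing f with
  | zero =>
    refine ⟨.nil, rfl, fun i hi => ?_⟩
    obtain rfl : i = 0 := by omega
    rfl
  | succ n ih =>
    obtain ⟨p, hp, hv⟩ := ih (fun i => f (i + 1)) (fun i hi => h (i + 1) (by omega))
    refine ⟨.cons (h 0 (by omega)) p, by simp [hp], ?_⟩
    rintro (_ | i) hi
    · simp
    · simpa using hv i (by omega)

/-- An injective sequence of consecutively adjacent vertices is the vertex sequence of a path. -/
theorem exists_path_of_seq {V : Type*} {G : SimpleGraph V} (l : ℕ) (f : ℕ → V)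
    (h : ∀ i < l, G.Adj (f i) (f (i + 1))) (hinj : ∀ i ≤ l, ∀ j ≤ l, f i = f j → i = j) :
    ∃ p : G.Walk (f 0) (f l), p.IsPath ∧ p.length = l ∧ ∀ i ≤ l, p.getVert i = f i := by
  obtain ⟨p, hp, hv⟩ := exists_walk_of_seq l f h
  refine ⟨p, ?_, hp, hv⟩
  rw [← Walk.IsPath.getVert_injOn_iff]
  intro i hi j hj e
  simp only [Set.mem_ofPred_eq, hp] at hi hj
  rw [hv i hi, hv j hj] at e
  exact hinj i hi j hj e

theorem stmt_4 {V : Type*} [Fintype V] (G : SimpleGraph V) (k : ℕ)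
    (hG : IsKConnected G k) {a b c d : V} (P : G.Walk a b) (Q : G.Walk c d)
    (hP : IsLongestPath G P) (hQ : IsLongestPath G Q)
    (hint : (({v | v ∈ P.support} ∩ {v | v ∈ Q.support}).ncard : ℤ) ≤ (k : ℤ) - 1) :
    ∃ (c' d' : V) (Q' : G.Walk c' d'), IsLongestPath G Q' ∧
      {v | v ∈ Q'.support} = {v | v ∈ Q.support} ∧
      ∃ i : ℕ, Q'.getVert 0 ∉ P.support ∧ Q'.getVert i ∉ P.support ∧
        G.Adj (Q'.getVert 0) (Q'.getVert i) ∧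
        (i = 1 ∨ (2 ≤ i ∧ i ≤ Q'.length - 1 ∧
          G.Adj (Q'.getVert 0) (Q'.getVert (i + 1)))) := by
  have hseq : SpanSeq G {v | v ∈ Q.support} Q.length Q.getVert :=
    { inj := fun i hi j hj e => hQ.1.getVert_injOn hi hj e
      adj := fun i hi => Q.adj_getVert_succ hi
      mem := fun i _ => Q.getVert_mem_support i
      surj := fun v hv => by
        obtain ⟨n, hn, hl⟩ := Walk.mem_support_iff_exists_getVert.1 hv
        exact ⟨n, hl, hn⟩ }
  obtain ⟨g, hg, i, hi, h0, hi', ha, hor⟩ := exists_goodSeq (S := {v | v ∈ P.support}) (k := k)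
    hseq hG.le_ncard_neighborSet (by
      intro g hg w hw
      by_contra hwT
      obtain ⟨p, hp, hlen, hv⟩ := exists_path_of_seq _ g hg.adj hg.inj
      have hwp : w ∉ p.support := by
        intro hmem
        obtain ⟨n, hn, hl⟩ := Walk.mem_support_iff_exists_getVert.1 hmem
        rw [hv n (by omega)] at hn
        exact hwT (hn ▸ hg.mem n (by omega))
      have := hQ.2 (.cons hw.symm p) (hp.cons hwp)
      rw [Walk.length_cons] at this
      omega) (by omega)
  obtain ⟨p, hp, hlen, hv⟩ := exists_path_of_seq _ g hg.adj hg.inj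
  refine ⟨_, _, p, ⟨hp, fun _ _ q hq => (hQ.2 q hq).trans hlen.ge⟩, ?_, i, ?_⟩
  · ext v
    constructor
    · intro hmem
      obtain ⟨n, hn, hl⟩ := Walk.mem_support_iff_exists_getVert.1 hmem
      rw [hv n (by omega)] at hn
      exact hn ▸ hg.mem n (by omega)
    · intro hmem
      obtain ⟨n, hn, rfl⟩ := hg.surj v hmem
      exact hv n hn ▸ p.getVert_mem_support n
  · rw [hv 0 (by omega), hv i hi, hlen]
    refine ⟨h0, hi', ha, hor.imp_right ?_⟩
    rintro ⟨h2, h3, h4⟩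
    exact ⟨h2, h3, by rwa [hv (i + 1) (by omega)]⟩
end

section
/- Let G be a k-connected finite simple graph with k ≥ 3, and let P and Q be two longest paths in G, each of length ℓ. Then P and Q share at least min{ 4k − ℓ − 3, k } vertices. -/
/-!
Let `m` be the number of common vertices of `P` and `Q`, and let `D` be a longest path of `G - P`,
with `j` vertices. The common vertices cut `Q` into at most `m + 1` stretches off `P`, each with at
most `j` vertices, so `ℓ + 1 - m ≤ j (m + 1)` (`runs`). The claim follows by playing this off
against lower bounds for `ℓ` that come from the attachments of `D` on `P`: as `P` is longest, two
attachments joined by a path off `P` with `e` vertices are at least `e + 1` apart on `P` (`gap`),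
and an attachment from which a path with `e` vertices starts off `P` has at least `e` vertices of
`P` on either side of it (`end_gap`). Adding up the gaps is the job of `packing`.

* `j = 0`: `P` is Hamiltonian, and `m = ℓ + 1 > k`.
* `j = 1`: `ℓ ≥ 2k` (`reach_bound`), while `ℓ ≤ 2m`; so `m ≥ k`.
* `j = 2`: both ends of `D` have at least `k - 1` neighbours on `P`, so `ℓ ≥ 3k - 2`
  (`ends_bound`), while `ℓ ≤ 3m + 1`; so `3(ℓ + m) ≥ 4ℓ - 1 ≥ 12k - 9`.
* `j ≥ 3`: `ℓ ≥ 4k - 4` (`long_bound`), and `m ≥ 1` since `ℓ ≥ 2k + j - 1` (`reach_bound`).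

For `long_bound`, suppose first that the ends of `D` have at most `j - 1` neighbours on `D` in
total. They then have at least `2k - j + 1` on `P`; common neighbours force gaps of size `j + 1`,
others gaps of size `2`, and the count suffices (if there are no neighbours on `P` at all, then `D`
is so long that `reach_bound` suffices). Otherwise `D` spans a cycle (`exists_cyc`), hence is a
component of `G - P`; it has at least `k` attachments, each of its vertices has at least
`k - j + 1` neighbours on `P`, and any two of its vertices are joined in it by a path on at least
three vertices. The gaps at attachments with two or more neighbours in `D` are therefore at least
`4`, and double counting the edges between `D` and `P` gives the bound (`cyc_bound`).

Paths are handled as lists of vertices, which makes cutting and concatenating them easy.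
-/

open SimpleGraph

namespace TwoLongestPaths

/-- A path of `G`, encoded as the list of its vertices; the empty list is allowed. -/
def IsPL {V : Type*} (G : SimpleGraph V) (L : List V) : Prop :=
  L.IsChain G.Adj ∧ L.Nodup

/-- The positions along the list `L` that hold a neighbour of `h`. -/
noncomputable def Nb {V : Type*} (G : SimpleGraph V) (L : List V) (h : V) : Finset ℕ :=
  open Classical in (Finset.range L.length).filter (fun s => ∃ x, L[s]? = some x ∧ G.Adj h x)

/-! ### Paths as lists, and detours off a longest path -/

section Paths

variable {V : Type*} {G : SimpleGraph V}

lemma IsPL.sub {L M : List V} (hL : IsPL G L) (h : M <:+: L) : IsPL G M := by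
  obtain ⟨A, B, rfl⟩ := h
  exact ⟨hL.1.left_of_append.right_of_append, hL.2.of_append_left.of_append_right⟩

lemma mem_Nb {L : List V} {h : V} {s : ℕ} :
    s ∈ Nb G L h ↔ ∃ x, L[s]? = some x ∧ G.Adj h x := by
  classical
  simp only [Nb, Finset.mem_filter, Finset.mem_range, and_iff_right_iff_imp]
  rintro ⟨x, hx, -⟩
  exact (List.getElem?_eq_some_iff.1 hx).1

lemma lt_of_mem_Nb {L : List V} {h : V} {s : ℕ} (hs : s ∈ Nb G L h) : s < L.length := by
  obtain ⟨x, hx, -⟩ := mem_Nb.1 hs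
  exact (List.getElem?_eq_some_iff.1 hx).1

lemma isChain_reverse {L : List V} (h : L.IsChain G.Adj) : L.reverse.IsChain G.Adj := by
  rw [List.isChain_reverse]
  exact h.imp fun _ _ h => h.symm

lemma IsPL.reverse {L : List V} (h : IsPL G L) : IsPL G L.reverse :=
  ⟨isChain_reverse h.1, List.nodup_reverse.2 h.2⟩

lemma IsPL.append {L M : List V} (hL : IsPL G L) (hM : IsPL G M) (hd : L.Disjoint M)
    (h : ∀ x ∈ L.getLast?, ∀ y ∈ M.head?, G.Adj x y) : IsPL G (L ++ M) :=
  ⟨List.isChain_append.2 ⟨hL.1, hM.1, h⟩, hL.2.append hM.2 hd⟩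

lemma getLast?_take_succ {L : List V} {s : ℕ} {x : V} (h : L[s]? = some x) :
    (L.take (s + 1)).getLast? = some x := by
  simp [List.getLast?_take, h]

/-- A longest path cannot be lengthened by a detour: if the path `D` avoids `P` and its ends are
adjacent to `P[s]` and `P[t]`, then the stretch of `P` between these has at least as many
inner vertices as `D`. -/
lemma gap {P D : List V} (hP : IsPL G P) (hmax : ∀ L, IsPL G L → L.length ≤ P.length)
    (hD : IsPL G D) (hPD : P.Disjoint D) {h h' : V} (hh : D.head? = some h)
    (hh' : D.getLast? = some h') {s t : ℕ} (hs : s ∈ Nb G P h) (ht : t ∈ Nb G P h')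
    (hst : s < t) : s + 1 + D.length ≤ t := by
  have htl := lt_of_mem_Nb ht
  obtain ⟨x, hx, hax⟩ := mem_Nb.1 hs
  obtain ⟨y, hy, hay⟩ := mem_Nb.1 ht
  have h1 : IsPL G (P.take (s + 1) ++ D) := by
    refine IsPL.append ⟨hP.1.take _, hP.2.sublist (List.take_sublist _ _)⟩ hD
      (fun a ha hb => hPD ((List.take_sublist _ _).subset ha) hb) ?_
    rw [getLast?_take_succ hx, hh]
    rintro _ ⟨⟩ _ ⟨⟩
    exact hax.symm
  have h2 : IsPL G ((P.take (s + 1) ++ D) ++ P.drop t) := by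
    refine h1.append ⟨hP.1.drop _, hP.2.sublist (List.drop_sublist _ _)⟩ ?_ ?_
    · rw [List.disjoint_append_left]
      exact ⟨List.disjoint_take_drop hP.2 hst,
        fun a ha hb => hPD ((List.drop_sublist _ _).subset hb) ha⟩
    · simp only [List.getLast?_append, hh', List.head?_drop, hy, Option.some_or]
      rintro _ ⟨⟩ _ ⟨⟩
      exact hay
  have h3 := hmax _ h2
  simp only [List.length_append, List.length_take, List.length_drop] at h3
  omega

/-- A longest path cannot be lengthened at an end: a path `D` avoiding `P` that starts next to
`P[s]` is at most as long as either part of `P` cut off at `P[s]`. -/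
lemma end_gap {P D : List V} (hP : IsPL G P) (hmax : ∀ L, IsPL G L → L.length ≤ P.length)
    (hD : IsPL G D) (hPD : P.Disjoint D) {h : V} (hh : D.head? = some h)
    {s : ℕ} (hs : s ∈ Nb G P h) : D.length ≤ s ∧ s + (D.length + 1) ≤ P.length := by
  have hsl := lt_of_mem_Nb hs
  obtain ⟨x, hx, hax⟩ := mem_Nb.1 hs
  have h1 : IsPL G (P.take (s + 1) ++ D) := by
    refine IsPL.append ⟨hP.1.take _, hP.2.sublist (List.take_sublist _ _)⟩ hD
      (fun a ha hb => hPD ((List.take_sublist _ _).subset ha) hb) ?_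
    rw [getLast?_take_succ hx, hh]
    rintro _ ⟨⟩ _ ⟨⟩
    exact hax.symm
  have h2 : IsPL G (D.reverse ++ P.drop s) := by
    refine hD.reverse.append ⟨hP.1.drop _, hP.2.sublist (List.drop_sublist _ _)⟩ ?_ ?_
    · intro a ha ha'
      exact hPD ((List.drop_sublist _ _).subset ha') (List.mem_reverse.1 ha)
    · simp only [List.getLast?_reverse, hh, List.head?_drop, hx]
      rintro _ ⟨⟩ _ ⟨⟩
      exact hax
  have h3 := hmax _ h1
  have h4 := hmax _ h2
  simp only [List.length_append, List.length_take, List.length_drop, List.length_reverse] at h3 h4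
  omega

/-- Positions of the neighbours of `h`, turned into vertices. -/
lemma mem_image_Nb [DecidableEq V] {L : List V} {h y : V} (hy : y ∈ L) (ha : G.Adj h y) (d : V) :
    y ∈ (Nb G L h).image (fun s => L.getD s d) := by
  obtain ⟨s, hs, rfl⟩ := List.getElem_of_mem hy
  refine Finset.mem_image.2 ⟨s, mem_Nb.2 ⟨_, List.getElem?_eq_getElem hs, ha⟩, ?_⟩
  simp [List.getD, hs]

lemma card_Nb_lt {D : List V} {h : V} (hD : h ∈ D) :
    (Nb G D h).card + 1 ≤ D.length := by
  classical
  obtain ⟨i, hi, rfl⟩ := List.getElem_of_mem hD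
  have hni : i ∉ Nb G D D[i] := by
    intro hm
    obtain ⟨x, hx, ha⟩ := mem_Nb.1 hm
    rw [List.getElem?_eq_getElem hi] at hx
    cases hx
    exact G.irrefl ha
  have : insert i (Nb G D D[i]) ⊆ Finset.range D.length := by
    intro s hs
    rcases Finset.mem_insert.1 hs with rfl | h
    · exact Finset.mem_range.2 hi
    · exact Finset.mem_range.2 (lt_of_mem_Nb h)
  have h1 := Finset.card_le_card this
  rw [Finset.card_insert_of_notMem hni, Finset.card_range] at h1
  exact h1

/-- A walk avoiding `P` contains a path with the same ends, avoiding `P`. -/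
lemma exists_isPL {P : List V} {u v : V} (w : G.Walk u v) (hw : ∀ x ∈ w.support, x ∉ P) :
    ∃ L, IsPL G L ∧ P.Disjoint L ∧ L.head? = some u ∧ L.getLast? = some v := by
  classical
  refine ⟨w.bypass.support, ⟨w.bypass.isChain_adj_support, w.bypass_isPath.support_nodup⟩, ?_, ?_, ?_⟩
  · intro x hx hx'
    exact hw x (w.support_bypass_subset_support hx') hx
  · rw [List.head?_eq_some_head w.bypass.support_ne_nil, w.bypass.head_support]
  · rw [List.getLast?_eq_some_getLast w.bypass.support_ne_nil, w.bypass.getLast_support]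

/-- A path that meets `D` can be redirected at its first vertex on `D` along the longer half
of `D`. -/
lemma exists_half {P D L : List V} (hD : IsPL G D) (hPD : P.Disjoint D) (hL : IsPL G L)
    (hPL : P.Disjoint L) {y d : V} (hy : L.head? = some y) (hd : d ∈ L) (hdD : d ∈ D) :
    ∃ M, IsPL G M ∧ P.Disjoint M ∧ M.head? = some y ∧ D.length + 1 ≤ 2 * M.length := by
  classical
  have hsplit : L.takeWhile (fun x => decide (x ∉ D)) ++ L.dropWhile (fun x => decide (x ∉ D)) = L :=
    List.takeWhile_append_dropWhile
  have hT : ∀ x ∈ L.takeWhile (fun x => decide (x ∉ D)), x ∉ D := by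
    intro x hx
    simpa using List.mem_takeWhile_imp hx
  have h5 := List.head?_dropWhile_not (fun x => decide (x ∉ D)) L
  generalize L.takeWhile (fun x => decide (x ∉ D)) = T at hsplit hT
  generalize L.dropWhile (fun x => decide (x ∉ D)) = R at hsplit h5
  cases R with
  | nil =>
    rw [List.append_nil] at hsplit
    subst hsplit
    exact absurd hdD (hT _ hd)
  | cons e R =>
    have heD : e ∈ D := by simpa using h5
    obtain ⟨D1, D2, rfl⟩ := List.append_of_mem heD
    subst hsplit
    have hTe : ∀ x ∈ T.getLast?, G.Adj x e := fun x hx => (List.isChain_append.1 hL.1).2.2 x hx e rfl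
    have hTp : IsPL G T := ⟨hL.1.left_of_append, hL.2.of_append_left⟩
    have hc2 : IsPL G (e :: D2) := ⟨hD.1.right_of_append, hD.2.of_append_right⟩
    have hc1 : IsPL G (e :: D1.reverse) := by
      have h6 : IsPL G (D1 ++ [e]) := by
        exact hD.sub ⟨[], D2, by simp⟩
      simpa using h6.reverse
    have main : ∀ E : List V, IsPL G (e :: E) → E ⊆ D1 ++ e :: D2 →
        IsPL G (T ++ e :: E) ∧ P.Disjoint (T ++ e :: E) ∧ (T ++ e :: E).head? = some y := by
      intro E hE hsub
      have hsub' : (e :: E) ⊆ D1 ++ e :: D2 := by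
        intro x hx
        rcases List.mem_cons.1 hx with rfl | h
        · exact heD
        · exact hsub h
      refine ⟨hTp.append hE (fun x hx hx' => hT x hx (hsub' hx')) ?_, ?_, ?_⟩
      · rintro x hx z hz
        cases hz
        exact hTe x hx
      · intro x hx hx'
        rcases List.mem_append.1 hx' with h | h
        · exact hPL hx (List.mem_append_left _ h)
        · exact hPD hx (hsub' h)
      · cases T with
        | nil => simpa using hy
        | cons a T => simpa using hy
    by_cases hlen : D1.length ≤ D2.length
    · obtain ⟨m1, m2, m3⟩ := main D2 hc2 (by intro x hx; simp [hx])
      refine ⟨_, m1, m2, m3, ?_⟩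
      simp only [List.length_append, List.length_cons]
      omega
    · obtain ⟨m1, m2, m3⟩ := main D1.reverse hc1 (by intro x hx; simp [List.mem_reverse.1 hx])
      refine ⟨_, m1, m2, m3, ?_⟩
      simp only [List.length_append, List.length_cons, List.length_reverse]
      omega

end Paths

/-! ### Counting lemmas -/

section Counting

/-- A lower bound for the span of a set `U` of positions with all gaps at least `2`, and gaps at
least `2 + f` after each element of `I`: the intervals `[s, s + 2)`, or `[s, s + 2 + f)` if
`s ∈ I`, are disjoint and fit into `[A, M - B + 2 + f)`. -/
lemma packing {U I : Finset ℕ} {A B M f : ℕ} (hne : U.Nonempty) (hIU : I ⊆ U)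
    (hA : ∀ s ∈ U, A ≤ s) (hB : ∀ s ∈ U, s + B ≤ M)
    (h2 : ∀ s ∈ U, ∀ t ∈ U, s < t → s + 2 ≤ t)
    (hf : ∀ s ∈ I, ∀ t ∈ U, s < t → s + 2 + f ≤ t) :
    A + B + 2 * U.card + f * I.card ≤ M + 2 + f := by
  classical
  have hdisj : (U : Set ℕ).PairwiseDisjoint
      (fun s => Finset.Ico s (s + 2 + if s ∈ I then f else 0)) := by
    intro s hs t ht hst
    simp only [Function.onFun]
    rw [Finset.disjoint_left]
    intro a ha hb
    simp only [Finset.mem_Ico] at ha hb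
    rcases lt_or_gt_of_ne hst with h | h
    · have := h2 s hs t ht h
      by_cases hI : s ∈ I
      · have := hf s hI t ht h
        simp only [hI, if_true] at ha
        omega
      · simp only [hI, if_false] at ha
        omega
    · have := h2 t ht s hs h
      by_cases hI : t ∈ I
      · have := hf t hI s hs h
        simp only [hI, if_true] at hb
        omega
      · simp only [hI, if_false] at hb
        omega
  have hsub : U.biUnion (fun s => Finset.Ico s (s + 2 + if s ∈ I then f else 0))
      ⊆ Finset.Ico A (M - B + 2 + f) := by
    intro a ha
    simp only [Finset.mem_biUnion, Finset.mem_Ico] at ha ⊢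
    obtain ⟨s, hs, h3, h4⟩ := ha
    have := hA s hs
    have := hB s hs
    split_ifs at h4 <;> omega
  have hc := Finset.card_le_card hsub
  rw [Finset.card_biUnion hdisj] at hc
  simp only [Nat.card_Ico] at hc
  have hs : ∑ s ∈ U, (s + 2 + (if s ∈ I then f else 0) - s) = 2 * U.card + f * I.card := by
    have : ∀ s ∈ U, (s + 2 + (if s ∈ I then f else 0) - s) = 2 + (if s ∈ I then f else 0) := by
      intro s _; omega
    rw [Finset.sum_congr rfl this, Finset.sum_add_distrib, ← Finset.sum_filter,
      Finset.filter_mem_eq_inter, Finset.inter_eq_right.2 hIU]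
    simp [mul_comm]
  rw [hs] at hc
  obtain ⟨s, hs⟩ := hne
  have := hA s hs
  have := hB s hs
  omega

/-- If the elements of `L` outside `c` come in runs of length at most `j`, then there are at most
`j` times `m + 1` of them, where `m` counts the elements in `c`, which separate the runs. -/
lemma runs {α : Type*} (c : α → Prop) [DecidablePred c] (j : ℕ) :
    ∀ (n : ℕ) (L : List α), L.length = n →
      (∀ M, M <:+: L → (∀ x ∈ M, ¬ c x) → M.length ≤ j) →
      (L.filter (fun x => ¬ c x)).length ≤ j * ((L.filter (fun x => c x)).length + 1) := by
  intro n
  induction n using Nat.strong_induction_on with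
  | _ n ih =>
  intro L hn hL
  have hsplit : L.takeWhile (fun x => ¬ c x) ++ L.dropWhile (fun x => ¬ c x) = L :=
    List.takeWhile_append_dropWhile
  have hT : ∀ x ∈ L.takeWhile (fun x => ¬ c x), ¬ c x := by
    intro x hx
    simpa using List.mem_takeWhile_imp hx
  generalize L.takeWhile (fun x => ¬ c x) = T at hsplit hT
  have hTj : T.length ≤ j := hL T ⟨[], L.dropWhile (fun x => ¬ c x), by simpa using hsplit⟩ hT
  have hf1 : T.filter (fun x => ¬ c x) = T := List.filter_eq_self.2 (by simpa using hT)
  have hf2 : T.filter (fun x => c x) = [] := List.filter_eq_nil_iff.2 (by simpa using hT)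
  cases hR : L.dropWhile (fun x => ¬ c x) with
  | nil =>
    rw [hR] at hsplit
    rw [← hsplit, List.append_nil, hf1, hf2]
    simpa using hTj
  | cons a R =>
    -- `dropWhile` stops at an element of `c`.
    have ha : c a := by
      have h5 := List.head?_dropWhile_not (fun x => decide (¬ c x)) L
      rw [hR] at h5
      simpa using h5
    rw [hR] at hsplit
    have hlen : R.length < n := by
      rw [← hn, ← hsplit]
      simp only [List.length_append, List.length_cons]
      omega
    have hRj := ih _ hlen R rfl (fun M hM => hL M (hM.trans ⟨T ++ [a], [], by simpa using hsplit⟩))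
    rw [← hsplit, List.filter_append, List.filter_append, hf1, hf2]
    simp only [List.filter_cons, ha, not_true_eq_false, decide_false, decide_true, if_true,
      List.nil_append, List.length_append, List.length_cons, Bool.false_eq_true, if_false]
    rw [Nat.mul_add]
    omega

end Counting

/-! ### Consequences of connectivity -/

section Connectivity

variable {V : Type*} [Fintype V] {G : SimpleGraph V} {k : ℕ}

/-- In a `k`-connected graph, a set `B` separating a nonempty set `A` from some further vertex
has at least `k` elements. -/
lemma card_separator (hG : IsKConnected G k) (A : Set V) (B : Finset V) {a z : V}
    (ha : a ∈ A) (hAB : ∀ x ∈ A, ∀ y, G.Adj x y → y ∈ A ∨ y ∈ B)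
    (haB : a ∉ B) (hz : z ∉ A) (hzB : z ∉ B) : k ≤ B.card := by
  by_contra hlt
  have hc := hG.2 B (not_le.1 hlt)
  have key : ∀ (u v : ((↑B : Set V)ᶜ : Set V)) (_ : (G.induce ((↑B : Set V)ᶜ)).Walk u v),
      u.1 ∈ A → v.1 ∈ A := by
    intro u v w
    induction w with
    | nil => exact id
    | @cons u v w h _ ih =>
      intro hu
      refine ih ?_
      have h' : G.Adj u.1 v.1 := h
      rcases hAB _ hu _ h' with h1 | h1
      · exact h1
      · exact absurd (Finset.mem_coe.2 h1) v.2
  obtain ⟨w⟩ := hc.preconnected ⟨a, by simpa using haB⟩ ⟨z, by simpa using hzB⟩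
  exact hz (key _ _ w ha)

lemma le_card_neighbors (hG : IsKConnected G k) (v : V) (B : Finset V)
    (hB : ∀ y, G.Adj v y → y ∈ B) (hv : v ∉ B) : k ≤ B.card := by
  classical
  by_cases h : ∃ z, z ≠ v ∧ z ∉ B
  · obtain ⟨z, hz, hzB⟩ := h
    refine card_separator hG {v} B rfl ?_ hv hz hzB
    rintro x rfl y hy
    exact Or.inr (hB y hy)
  · push Not at h
    have : (Finset.univ.erase v) ⊆ B := fun z hz => h z (Finset.ne_of_mem_erase hz)
    have h1 := Finset.card_le_card this
    rw [Finset.card_erase_of_mem (Finset.mem_univ _), Finset.card_univ] at h1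
    have := hG.1
    omega

lemma le_card_Nb (hG : IsKConnected G k) {P D : List V} {h : V}
    (hn : ∀ y, G.Adj h y → y ∈ P ∨ y ∈ D) : k ≤ (Nb G P h).card + (Nb G D h).card := by
  classical
  have himg : ∀ (L : List V), ∀ y ∈ (Nb G L h).image (fun s => L.getD s h), G.Adj h y := by
    intro L y hy
    obtain ⟨s, hs, rfl⟩ := Finset.mem_image.1 hy
    obtain ⟨x, hx, ha⟩ := mem_Nb.1 hs
    simpa [List.getD, hx] using ha
  refine (le_card_neighbors hG h ((Nb G P h).image (fun s => P.getD s h) ∪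
    (Nb G D h).image (fun s => D.getD s h)) ?_ ?_).trans
    ((Finset.card_union_le _ _).trans (add_le_add Finset.card_image_le Finset.card_image_le))
  · intro y hy
    rcases hn y hy with h1 | h1
    · exact Finset.mem_union_left _ (mem_image_Nb h1 hy _)
    · exact Finset.mem_union_right _ (mem_image_Nb h1 hy _)
  · intro hh
    rcases Finset.mem_union.1 hh with h1 | h1 <;> exact G.irrefl (himg _ _ h1)

/-- A path `D` off the longest path `P` forces `P` to have at least `2k + |D|` vertices:
the component of `G - P` containing `D` has at least `k` attachments on `P`, no two consecutive,
and none close to an end of `P`. -/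
lemma reach_bound (hG : IsKConnected G k) {P D : List V} (hP : IsPL G P)
    (hmax : ∀ L, IsPL G L → L.length ≤ P.length) (hk : 1 ≤ k) (hP0 : P ≠ [])
    (hD : IsPL G D) (hPD : P.Disjoint D) (hD0 : D ≠ []) : 2 * k + D.length ≤ P.length := by
  classical
  obtain ⟨d, hd⟩ := List.exists_mem_of_ne_nil D hD0
  set H : Set V := {y | ∃ w : G.Walk y d, ∀ x ∈ w.support, x ∉ P} with hH
  have hHP : ∀ y ∈ H, y ∉ P := fun y ⟨w, hw⟩ => hw y w.start_mem_support
  have hhalf : ∀ y ∈ H, ∃ M, IsPL G M ∧ P.Disjoint M ∧ M.head? = some y ∧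
      D.length + 1 ≤ 2 * M.length := by
    rintro y ⟨w, hw⟩
    obtain ⟨L, hL, hPL, h1, h2⟩ := exists_isPL w hw
    exact exists_half hD hPD hL hPL h1 (List.mem_of_getLast? h2) hd
  set U : Finset ℕ := Finset.univ.biUnion (fun y => if y ∈ H then Nb G P y else ∅) with hU
  have hUm : ∀ s, s ∈ U ↔ ∃ y ∈ H, s ∈ Nb G P y := by
    intro s
    simp only [hU, Finset.mem_biUnion, Finset.mem_univ, true_and]
    refine exists_congr fun y => ?_
    by_cases hy : y ∈ H <;> simp [hy]
  have hends : ∀ s ∈ U, (D.length + 2) / 2 ≤ s ∧ s + ((D.length + 2) / 2 + 1) ≤ P.length := by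
    intro s hs
    obtain ⟨y, hy, hsy⟩ := (hUm s).1 hs
    obtain ⟨M, hM, hPM, hM1, hM2⟩ := hhalf y hy
    have := end_gap hP hmax hM hPM hM1 hsy
    omega
  have hDl : 1 ≤ D.length := List.length_pos_iff.2 hD0
  have hdH : d ∈ H := ⟨Walk.nil, by
    intro x hx
    simp only [Walk.support_nil, List.mem_singleton] at hx
    subst hx
    exact fun h => hPD h hd⟩
  have hPl : 0 < P.length := List.length_pos_iff.2 hP0
  have hcard : k ≤ U.card := by
    refine (card_separator hG H (U.image (fun s => P.getD s d)) hdH ?_ ?_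
      (z := P[0]) ?_ ?_).trans Finset.card_image_le
    · rintro x hx y hxy
      by_cases hyP : y ∈ P
      · right
        obtain ⟨s, hs, hsy⟩ := Finset.mem_image.1 (mem_image_Nb hyP hxy d)
        exact Finset.mem_image.2 ⟨s, (hUm s).2 ⟨x, hx, hs⟩, hsy⟩
      · left
        obtain ⟨w, hw⟩ := hx
        refine ⟨Walk.cons hxy.symm w, ?_⟩
        simp only [Walk.support_cons, List.mem_cons, forall_eq_or_imp]
        exact ⟨hyP, hw⟩
    · intro h
      obtain ⟨s, hs, hsd⟩ := Finset.mem_image.1 h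
      have hsl := (hends s hs).2
      have hsl' : s < P.length := by omega
      refine hPD ?_ hd
      rw [← hsd]
      simp [List.getD, hsl']
    · exact fun h => hHP _ h (List.getElem_mem _)
    · intro h
      obtain ⟨s, hs, hsd⟩ := Finset.mem_image.1 h
      have hsl := hends s hs
      have hsl' : s < P.length := by omega
      have : P[s] = P[0] := by simpa [List.getD, hsl'] using hsd
      have := (List.Nodup.getElem_inj_iff hP.2).1 this
      omega
  have hgap : ∀ s ∈ U, ∀ t ∈ U, s < t → s + 2 ≤ t := by
    intro s hs t ht hst
    obtain ⟨y, ⟨w, hw⟩, hsy⟩ := (hUm s).1 hs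
    obtain ⟨z, ⟨v, hv⟩, htz⟩ := (hUm t).1 ht
    obtain ⟨L, hL, hPL, h1, h2⟩ := exists_isPL (P := P) (w.append v.reverse) (by
      intro x hx
      rw [Walk.mem_support_append_iff, Walk.support_reverse, List.mem_reverse] at hx
      exact hx.elim (hw x) (hv x))
    have := gap hP hmax hL hPL h1 h2 hsy htz hst
    have : 0 < L.length := List.length_pos_iff.2 (by rintro rfl; simp at h1)
    omega
  have := packing (U := U) (I := ∅) (f := 0) (Finset.card_pos.1 (by omega)) (by simp)
    (fun s hs => (hends s hs).1) (fun s hs => (hends s hs).2) hgap (by simp)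
  simp only [Finset.card_empty] at this
  omega

end Connectivity

/-! ### The longest path off `P` -/

section OffPath

variable {V : Type*} {G : SimpleGraph V}

/-- A cyclic list of vertices with consecutive ones adjacent: a cycle, if it has length at
least three. -/
def IsCyc (G : SimpleGraph V) (C : List V) : Prop :=
  IsPL G C ∧ ∀ x ∈ C.getLast?, ∀ y ∈ C.head?, G.Adj x y

lemma IsCyc.rotate {A B : List V} (h : IsCyc G (A ++ B)) : IsCyc G (B ++ A) := by
  rcases eq_or_ne A [] with rfl | hA
  · simpa using h
  rcases eq_or_ne B [] with rfl | hB
  · simpa using h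
  obtain ⟨⟨h1, h2⟩, h3⟩ := h
  rw [List.isChain_append] at h1
  rw [List.getLast?_append_of_ne_nil _ hB, List.head?_append_of_ne_nil _ hA] at h3
  refine ⟨⟨List.isChain_append.2 ⟨h1.2.1, h1.1, h3⟩, List.nodup_append_comm.1 h2⟩, ?_⟩
  rw [List.getLast?_append_of_ne_nil _ hA, List.head?_append_of_ne_nil _ hB]
  exact h1.2.2

lemma IsCyc.exists_start {C : List V} (h : IsCyc G C) {x : V} (hx : x ∈ C) :
    ∃ L, IsCyc G (x :: L) ∧ (x :: L).Perm C := by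
  obtain ⟨A, B, rfl⟩ := List.append_of_mem hx
  exact ⟨B ++ A, h.rotate, by simpa using (List.perm_append_comm (l₁ := x :: B) (l₂ := A))⟩

/-- Two vertices of a cycle are joined along it by a path with at least three vertices. -/
lemma IsCyc.exists_path {C : List V} (h : IsCyc G C) (hC : 3 ≤ C.length) {x y : V} (hx : x ∈ C)
    (hy : y ∈ C) (hxy : x ≠ y) :
    ∃ L, IsPL G L ∧ L ⊆ C ∧ L.head? = some x ∧ L.getLast? = some y ∧ 3 ≤ L.length := by
  obtain ⟨L, hL, hLC⟩ := h.exists_start hx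
  have hyL : y ∈ L := by
    have := hLC.symm.subset hy
    rcases List.mem_cons.1 this with rfl | h
    · exact absurd rfl hxy
    · exact h
  obtain ⟨R, S, rfl⟩ := List.append_of_mem hyL
  have hlen := hLC.length_eq
  simp only [List.length_cons, List.length_append] at hlen
  by_cases hR : R = []
  · subst hR
    have hS : S ≠ [] := by
      rintro rfl
      simp at hlen
      omega
    have hr : IsPL G (y :: S ++ [x]) := (IsCyc.rotate (A := [x]) (B := y :: S) (by simpa using hL)).1
    refine ⟨(y :: S ++ [x]).reverse, hr.reverse, ?_, by simp,
      by rw [List.getLast?_reverse]; rfl, ?_⟩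
    · intro z hz
      refine hLC.subset ?_
      simp at hz ⊢
      tauto
    · have := List.length_pos_iff.2 hS
      simp
      omega
  · have hpre : (x :: (R ++ [y])) <:+: (x :: (R ++ y :: S)) := ⟨[], S, by simp⟩
    refine ⟨x :: (R ++ [y]), hL.1.sub hpre, ?_, rfl,
      ?_, ?_⟩
    · exact fun z hz => hLC.subset (hpre.subset hz)
    · rw [← List.cons_append, List.getLast?_concat]
    · have := List.length_pos_iff.2 hR
      simp
      omega

/-- The crossing argument: if the ends of a path `D` have together at least `|D|` neighbours
on `D`, then the vertices of `D` form a cycle. -/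
lemma exists_cyc {D : List V} (hD : IsPL G D) {h h' : V} (hh : D.head? = some h)
    (hh' : D.getLast? = some h') (hc : D.length ≤ (Nb G D h).card + (Nb G D h').card) :
    ∃ C, IsCyc G C ∧ C.Perm D := by
  classical
  have hD0 : 0 < D.length := List.length_pos_iff.2 (by rintro rfl; simp at hh)
  have h0 : D[0]? = some h := by rwa [List.head?_eq_getElem?] at hh
  have h1 : D[D.length - 1]? = some h' := by rwa [List.getLast?_eq_getElem?] at hh'
  have hA : Nb G D h ⊆ Finset.Ico 1 D.length := by
    intro s hs
    have := lt_of_mem_Nb hs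
    obtain ⟨x, hx, ha⟩ := mem_Nb.1 hs
    have : s ≠ 0 := by
      rintro rfl
      rw [h0] at hx
      cases hx
      exact G.irrefl ha
    simp only [Finset.mem_Ico]
    omega
  have hB : (Nb G D h').image (· + 1) ⊆ Finset.Ico 1 D.length := by
    intro s hs
    obtain ⟨t, ht, rfl⟩ := Finset.mem_image.1 hs
    have := lt_of_mem_Nb ht
    obtain ⟨x, hx, ha⟩ := mem_Nb.1 ht
    have : t ≠ D.length - 1 := by
      rintro rfl
      rw [h1] at hx
      cases hx
      exact G.irrefl ha
    simp only [Finset.mem_Ico]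
    omega
  have hnd : ¬ Disjoint (Nb G D h) ((Nb G D h').image (· + 1)) := by
    intro hdis
    have := Finset.card_le_card (Finset.union_subset hA hB)
    rw [Finset.card_union_of_disjoint hdis,
      Finset.card_image_of_injective _ (add_left_injective 1), Nat.card_Ico] at this
    omega
  obtain ⟨s, hs, hs'⟩ := Finset.not_disjoint_iff.1 hnd
  obtain ⟨i, hi, rfl⟩ := Finset.mem_image.1 hs'
  obtain ⟨x, hx, hax⟩ := mem_Nb.1 hs
  obtain ⟨y, hy, hay⟩ := mem_Nb.1 hi
  have hil := lt_of_mem_Nb hs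
  refine ⟨D.take (i + 1) ++ (D.drop (i + 1)).reverse, ⟨?_, ?_⟩, ?_⟩
  · refine IsPL.append ⟨hD.1.take _, hD.2.sublist (List.take_sublist _ _)⟩
      (IsPL.reverse ⟨hD.1.drop _, hD.2.sublist (List.drop_sublist _ _)⟩) ?_ ?_
    · intro a ha ha'
      exact List.disjoint_take_drop hD.2 le_rfl ha (List.mem_reverse.1 ha')
    · rw [getLast?_take_succ hy, List.head?_reverse, List.getLast?_drop, if_neg (by omega), hh']
      rintro _ ⟨⟩ _ ⟨⟩
      exact hay.symm
  · rw [List.getLast?_append_of_ne_nil _ (by simp; omega), List.getLast?_reverse, List.head?_drop,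
      List.head?_append_of_ne_nil _ (by simp; rintro rfl; simp at hh), List.head?_take,
      if_neg (by omega), hx, hh]
    rintro _ ⟨⟩ _ ⟨⟩
    exact hax.symm
  · refine ((List.reverse_perm _).append_left _).trans ?_
    rw [List.take_append_drop]

/-- Gap counting for the attachments `N, N'` of the two ends of a path `D` off `P`: every gap
touching `N ∩ N'` has room for all of `D`, and so do the two ends of `P`. -/
lemma ends_bound {P D : List V} (hP : IsPL G P) (hmax : ∀ L, IsPL G L → L.length ≤ P.length)
    (hD : IsPL G D) (hPD : P.Disjoint D) {h h' : V} (hh : D.head? = some h)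
    (hh' : D.getLast? = some h') (hne : 1 ≤ (Nb G P h).card + (Nb G P h').card) :
    ∃ u i : ℕ, u + i = (Nb G P h).card + (Nb G P h').card ∧ (Nb G P h).card ≤ u ∧
      2 * D.length + 2 * u ≤ P.length + 1 ∧
      D.length + 2 * u + (D.length - 1) * i ≤ P.length := by
  classical
  have hD0 : 0 < D.length := List.length_pos_iff.2 (by rintro rfl; simp at hh)
  have hPr : P.Disjoint D.reverse := fun x hx hx' => hPD hx (List.mem_reverse.1 hx')
  have hh1 : D.reverse.head? = some h' := by rw [List.head?_reverse, hh']
  have hh1' : D.reverse.getLast? = some h := by rw [List.getLast?_reverse, hh]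
  have hsing : ∀ {x : V}, x ∈ D → IsPL G [x] ∧ P.Disjoint [x] := by
    intro x hx
    refine ⟨⟨List.isChain_singleton x, List.nodup_singleton x⟩, ?_⟩
    intro y hy hy'
    rw [List.mem_singleton] at hy'
    exact hPD hy (hy' ▸ hx)
  have hmh := List.mem_of_head? hh
  have hmh' := List.mem_of_getLast? hh'
  have hcard := Finset.card_union_add_card_inter (Nb G P h) (Nb G P h')
  have hends : ∀ s ∈ Nb G P h ∪ Nb G P h', D.length ≤ s ∧ s + (D.length + 1) ≤ P.length := by
    intro s hs
    rcases Finset.mem_union.1 hs with h1 | h1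
    · exact end_gap hP hmax hD hPD hh h1
    · simpa using end_gap hP hmax hD.reverse hPr hh1 h1
  have cross : ∀ s t, s < t → (s ∈ Nb G P h ∧ t ∈ Nb G P h') ∨ (s ∈ Nb G P h' ∧ t ∈ Nb G P h) →
      s + 1 + D.length ≤ t := by
    rintro s t hst (⟨h1, h2⟩ | ⟨h1, h2⟩)
    · exact gap hP hmax hD hPD hh hh' h1 h2 hst
    · simpa using gap hP hmax hD.reverse hPr hh1 hh1' h1 h2 hst
  have same : ∀ x ∈ D, ∀ s t, s < t → s ∈ Nb G P x → t ∈ Nb G P x → s + 2 ≤ t := by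
    intro x hx s t hst h1 h2
    have := gap hP hmax (hsing hx).1 (hsing hx).2 rfl rfl h1 h2 hst
    simp only [List.length_singleton] at this
    omega
  have hgap : ∀ s ∈ Nb G P h ∪ Nb G P h', ∀ t ∈ Nb G P h ∪ Nb G P h', s < t → s + 2 ≤ t := by
    intro s hs t ht hst
    rcases Finset.mem_union.1 hs with h1 | h1 <;> rcases Finset.mem_union.1 ht with h2 | h2
    · exact same h hmh s t hst h1 h2
    · have := cross s t hst (Or.inl ⟨h1, h2⟩)
      omega
    · have := cross s t hst (Or.inr ⟨h1, h2⟩)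
      omega
    · exact same h' hmh' s t hst h1 h2
  have hne' : (Nb G P h ∪ Nb G P h').Nonempty := by
    rw [Finset.nonempty_iff_ne_empty]
    intro h0
    rw [Finset.union_eq_empty] at h0
    simp [h0.1, h0.2] at hne
  have p1 := packing (I := ∅) (f := 0) hne' (by simp) (fun s hs => (hends s hs).1)
    (fun s hs => (hends s hs).2) hgap (by simp)
  have p2 := packing (I := Nb G P h ∩ Nb G P h') (f := D.length - 1) hne'
    (Finset.inter_subset_left.trans Finset.subset_union_left) (fun s hs => (hends s hs).1)
    (fun s hs => (hends s hs).2) hgap (by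
      intro s hs t ht hst
      rw [Finset.mem_inter] at hs
      have : s + 1 + D.length ≤ t := by
        rcases Finset.mem_union.1 ht with h2 | h2
        · exact cross s t hst (Or.inr ⟨hs.2, h2⟩)
        · exact cross s t hst (Or.inl ⟨hs.1, h2⟩)
      omega)
  refine ⟨_, _, hcard, Finset.card_le_card Finset.subset_union_left, ?_, ?_⟩
  · simp only [Finset.card_empty] at p1
    omega
  · omega

end OffPath

/-! ### Lower bounds for the length of a longest path -/

section Bounds

variable {V : Type*} [Fintype V] {G : SimpleGraph V} {k : ℕ}

/-- If the vertices of a longest path `C` of `G - P` form a cycle, they form a component of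
`G - P`, and counting gaps between all its attachments on `P` bounds `P` from below. -/
lemma cyc_bound (hG : IsKConnected G k) {P C : List V} (hP : IsPL G P)
    (hmax : ∀ L, IsPL G L → L.length ≤ P.length) (hk : 1 ≤ k) (hP0 : P ≠ [])
    (hC : IsCyc G C) (hPC : P.Disjoint C) (hC3 : 3 ≤ C.length)
    (hCmax : ∀ L, IsPL G L → P.Disjoint L → L.length ≤ C.length) :
    4 * k ≤ P.length + 3 := by
  classical
  have hclosed : ∀ x ∈ C, ∀ y, G.Adj x y → y ∈ P ∨ y ∈ C := by
    intro x hx y hxy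
    by_contra! hy
    obtain ⟨L, hL, hLC⟩ := hC.exists_start hx
    have h1 : IsPL G (y :: x :: L) := by
      refine ⟨List.isChain_cons_cons.2 ⟨hxy.symm, hL.1.1⟩, List.nodup_cons.2 ⟨?_, hL.1.2⟩⟩
      exact fun h => hy.2 (hLC.subset h)
    have h2 := hCmax _ h1 (by
      intro z hz hz'
      rcases List.mem_cons.1 hz' with rfl | h
      · exact hy.1 hz
      · exact hPC hz (hLC.subset h))
    have := hLC.length_eq
    simp only [List.length_cons] at h2 this
    omega
  set U : Finset ℕ := C.toFinset.biUnion (fun x => Nb G P x) with hU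
  have hUm : ∀ s, s ∈ U ↔ ∃ x ∈ C, s ∈ Nb G P x := by simp [hU]
  set I : Finset ℕ := U.filter (fun s => 1 < (C.toFinset.filter (fun x => s ∈ Nb G P x)).card)
    with hI
  have hends : ∀ s ∈ U, C.length ≤ s ∧ s + (C.length + 1) ≤ P.length := by
    intro s hs
    obtain ⟨x, hx, hsx⟩ := (hUm s).1 hs
    obtain ⟨L, hL, hLC⟩ := hC.exists_start hx
    have := end_gap hP hmax hL.1 (fun z hz hz' => hPC hz (hLC.subset hz')) rfl hsx
    rwa [hLC.length_eq] at this
  have hPl : 0 < P.length := List.length_pos_iff.2 hP0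
  obtain ⟨d, hd⟩ := List.exists_mem_of_ne_nil C (by rintro rfl; simp at hC3)
  have hcard : k ≤ U.card := by
    refine (card_separator hG {x | x ∈ C} (U.image (fun s => P.getD s d)) hd ?_ ?_
      (z := P[0]) ?_ ?_).trans Finset.card_image_le
    · rintro x hx y hxy
      by_cases hyP : y ∈ P
      · right
        obtain ⟨s, hs, hsy⟩ := Finset.mem_image.1 (mem_image_Nb hyP hxy d)
        exact Finset.mem_image.2 ⟨s, (hUm s).2 ⟨x, hx, hs⟩, hsy⟩
      · exact Or.inl ((hclosed x hx y hxy).resolve_left hyP)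
    · intro h
      obtain ⟨s, hs, hsd⟩ := Finset.mem_image.1 h
      have hsl := (hends s hs).2
      have hsl' : s < P.length := by omega
      refine hPC ?_ hd
      rw [← hsd]
      simp [List.getD, hsl']
    · exact fun h => hPC (List.getElem_mem _) h
    · intro h
      obtain ⟨s, hs, hsd⟩ := Finset.mem_image.1 h
      have hsl := hends s hs
      have hsl' : s < P.length := by omega
      have : P[s] = P[0] := by simpa [List.getD, hsl'] using hsd
      have := (List.Nodup.getElem_inj_iff hP.2).1 this
      omega
  have cross : ∀ x ∈ C, ∀ y ∈ C, x ≠ y → ∀ s ∈ Nb G P x, ∀ t ∈ Nb G P y, s < t → s + 4 ≤ t := by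
    intro x hx y hy hxy s hs t ht hst
    obtain ⟨L, hL, hLC, h1, h2, h3⟩ := hC.exists_path hC3 hx hy hxy
    have := gap hP hmax hL (fun z hz hz' => hPC hz (hLC hz')) h1 h2 hs ht hst
    omega
  have hgap : ∀ s ∈ U, ∀ t ∈ U, s < t → s + 2 ≤ t := by
    intro s hs t ht hst
    obtain ⟨x, hx, hsx⟩ := (hUm s).1 hs
    obtain ⟨y, hy, hty⟩ := (hUm t).1 ht
    by_cases hxy : x = y
    · subst hxy
      have := gap (D := [x]) hP hmax ⟨List.isChain_singleton x, List.nodup_singleton x⟩ (by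
        intro z hz hz'
        rw [List.mem_singleton] at hz'
        exact hPC hz (hz' ▸ hx)) rfl rfl hsx hty hst
      simp only [List.length_singleton] at this
      omega
    · have := cross x hx y hy hxy s hsx t hty hst
      omega
  have hgapI : ∀ s ∈ I, ∀ t ∈ U, s < t → s + 2 + 2 ≤ t := by
    intro s hs t ht hst
    obtain ⟨y, hy, hty⟩ := (hUm t).1 ht
    obtain ⟨x, hx, hxy⟩ := Finset.exists_mem_ne (Finset.mem_filter.1 hs).2 y
    rw [Finset.mem_filter, List.mem_toFinset] at hx
    exact cross x hx.1 y hy hxy s hx.2 t hty hst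
  have hne : U.Nonempty := Finset.card_pos.1 (by omega)
  have p1 := packing (I := ∅) (f := 0) hne (by simp) (fun s hs => (hends s hs).1)
    (fun s hs => (hends s hs).2) hgap (by simp)
  have p2 := packing (I := I) hne (Finset.filter_subset _ _) (fun s hs => (hends s hs).1)
    (fun s hs => (hends s hs).2) hgap hgapI
  have hCc : C.toFinset.card = C.length := List.toFinset_card_of_nodup hC.1.2
  -- Count the edges between `C` and `P` from both sides.
  have hdc : ∑ x ∈ C.toFinset, (Nb G P x).card
      = ∑ s ∈ U, (C.toFinset.filter (fun x => s ∈ Nb G P x)).card := by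
    have := Finset.sum_card_bipartiteAbove_eq_sum_card_bipartiteBelow
      (s := C.toFinset) (t := U) (fun x s => s ∈ Nb G P x)
    simp only [Finset.bipartiteAbove, Finset.bipartiteBelow] at this
    rw [← this]
    refine Finset.sum_congr rfl fun x hx => congrArg _ ?_
    ext s
    rw [Finset.mem_filter, hUm]
    exact ⟨fun h => ⟨⟨x, List.mem_toFinset.1 hx, h⟩, h⟩, fun h => h.2⟩
  have hlow : C.length * k ≤ ∑ x ∈ C.toFinset, (Nb G P x).card + C.length * (C.length - 1) := by
    have : ∑ x ∈ C.toFinset, k ≤ ∑ x ∈ C.toFinset, ((Nb G P x).card + (C.length - 1)) := by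
      refine Finset.sum_le_sum fun x hx => ?_
      rw [List.mem_toFinset] at hx
      have h1 := le_card_Nb hG (hclosed x hx)
      have h2 := card_Nb_lt (G := G) hx
      omega
    rwa [Finset.sum_add_distrib, Finset.sum_const, Finset.sum_const, hCc, smul_eq_mul,
      smul_eq_mul] at this
  have hupp : ∑ s ∈ U, (C.toFinset.filter (fun x => s ∈ Nb G P x)).card
      ≤ U.card + (C.length - 1) * I.card := by
    have : ∀ s ∈ U, (C.toFinset.filter (fun x => s ∈ Nb G P x)).card
        ≤ 1 + if s ∈ I then C.length - 1 else 0 := by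
      intro s hs
      split_ifs with h
      · have := Finset.card_filter_le C.toFinset (fun x => s ∈ Nb G P x)
        omega
      · rw [hI, Finset.mem_filter, not_and] at h
        have := h hs
        omega
    refine (Finset.sum_le_sum this).trans ?_
    rw [Finset.sum_add_distrib, ← Finset.sum_filter, Finset.filter_mem_eq_inter,
      Finset.inter_eq_right.2 (Finset.filter_subset _ _)]
    simp only [Finset.sum_const, smul_eq_mul, mul_one]
    rw [mul_comm I.card]
  rw [hdc] at hlow
  have hall := hlow.trans (Nat.add_le_add_right hupp _)
  simp only [Finset.card_empty] at p1
  generalize C.length = j at *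
  generalize U.card = u at *
  generalize I.card = i at *
  generalize P.length = M at *
  obtain ⟨j, rfl⟩ : ∃ n, j = n + 3 := ⟨j - 3, by omega⟩
  by_contra hlt
  have e1 : u + i + (j + 3) ≤ 2 * k - 1 := by omega
  -- `k ≤ u` and the gap count leave a nonnegative slack `r`; in terms of it the two-sided edge
  -- count becomes contradictory.
  obtain ⟨r, rfl⟩ : ∃ r, k = i + j + 4 + r := ⟨k - (i + j + 4), by omega⟩
  simp only [show j + 3 - 1 = j + 2 by omega] at hall
  have e2 : u ≤ i + j + 4 + 2 * r := by omega
  nlinarith [Nat.zero_le (j * r)]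

/-- If `G - P` has a path on three vertices, then the longest path `P` has at least `4k - 3`
vertices. -/
lemma long_bound (hG : IsKConnected G k) {P D : List V} (hP : IsPL G P)
    (hmax : ∀ L, IsPL G L → L.length ≤ P.length) (hk : 1 ≤ k) (hP0 : P ≠ [])
    (hD : IsPL G D) (hPD : P.Disjoint D) (hD3 : 3 ≤ D.length)
    (hDmax : ∀ L, IsPL G L → P.Disjoint L → L.length ≤ D.length)
    {h h' : V} (hh : D.head? = some h) (hh' : D.getLast? = some h')
    (h1 : k ≤ (Nb G P h).card + (Nb G D h).card)
    (h2 : k ≤ (Nb G P h').card + (Nb G D h').card) :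
    4 * k ≤ P.length + 3 := by
  by_cases hc : D.length ≤ (Nb G D h).card + (Nb G D h').card
  · obtain ⟨C, hC, hCD⟩ := exists_cyc hD hh hh' hc
    exact cyc_bound hG hP hmax hk hP0 hC (fun z hz hz' => hPD hz (hCD.subset hz'))
      (by rwa [hCD.length_eq]) (by rwa [hCD.length_eq])
  · by_cases hne : 1 ≤ (Nb G P h).card + (Nb G P h').card
    · obtain ⟨u, i, e1, -, e2, e3⟩ := ends_bound hP hmax hD hPD hh hh' hne
      obtain ⟨n, hn⟩ : ∃ n, D.length = n + 3 := ⟨D.length - 3, by omega⟩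
      rw [hn] at e2 e3 hc
      rw [show n + 3 - 1 = n + 2 by omega] at e3
      rcases Nat.eq_zero_or_pos i with rfl | hi
      · omega
      · obtain ⟨q, rfl⟩ : ∃ q, i = q + 1 := ⟨i - 1, by omega⟩
        have : n + 2 + 2 * q ≤ (n + 2) * (q + 1) := by nlinarith [Nat.zero_le (n * q)]
        omega
    · have := reach_bound hG hP hmax hk hP0 hD hPD (by rintro rfl; simp at hD3)
      omega

lemma exists_longest_off (P : List V) :
    ∃ D, IsPL G D ∧ P.Disjoint D ∧ ∀ L, IsPL G L → P.Disjoint L → L.length ≤ D.length := by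
  classical
  have hb : ∀ L, IsPL G L → L.length ≤ Fintype.card V := fun L hL => hL.2.length_le_card
  have hex : ∃ n, ∃ D, IsPL G D ∧ P.Disjoint D ∧ D.length = n :=
    ⟨0, [], ⟨List.isChain_nil, List.nodup_nil⟩, by simp, rfl⟩
  obtain ⟨n0, D0, hD0, hPD0, hl0⟩ := hex
  obtain ⟨D, hD, hPD, hl⟩ := Nat.findGreatest_spec
    (P := fun n => ∃ D, IsPL G D ∧ P.Disjoint D ∧ D.length = n)
    (hl0 ▸ hb D0 hD0) ⟨D0, hD0, hPD0, hl0⟩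
  refine ⟨D, hD, hPD, fun L hL hPL => ?_⟩
  rw [hl]
  exact Nat.le_findGreatest (hb L hL) ⟨L, hL, hPL, rfl⟩

/-- The theorem for paths given as lists of vertices. -/
lemma list_bound [DecidableEq V] (hG : IsKConnected G k) {P Q : List V} (hP : IsPL G P)
    (hmax : ∀ L, IsPL G L → L.length ≤ P.length) (hk : 2 ≤ k) (hP0 : P ≠ [])
    (hQ : IsPL G Q) (hQl : Q.length = P.length) :
    k ≤ (Q.filter (fun x => x ∈ P)).length ∨
      4 * k ≤ P.length + (Q.filter (fun x => x ∈ P)).length + 2 := by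
  obtain ⟨D, hD, hPD, hDmax⟩ := exists_longest_off (G := G) P
  have hruns := runs (fun x => x ∈ P) D.length _ Q rfl (by
    intro M hM hMP
    exact hDmax M (hQ.sub hM) (fun x hx hx' => hMP x hx' hx))
  have hsum : (Q.filter (fun x => x ∈ P)).length + (Q.filter (fun x => ¬ x ∈ P)).length
      = P.length := by
    rw [← hQl]
    have := List.length_eq_length_filter_add (l := Q) (fun x => decide (x ∈ P))
    simp only [decide_not]
    omega
  generalize (Q.filter (fun x => x ∈ P)).length = m at *
  generalize (Q.filter (fun x => ¬ x ∈ P)).length = m' at *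
  -- If `P` is a Hamiltonian path, all of `Q` lies on it.
  rcases eq_or_ne D [] with rfl | hD0
  · have hall : ∀ v, v ∈ P := by
      intro v
      by_contra hv
      have := hDmax [v] ⟨List.isChain_singleton v, List.nodup_singleton v⟩ (by simpa using hv)
      simp at this
    have h1 : Fintype.card V ≤ P.toFinset.card := by
      rw [← Finset.card_univ]
      exact Finset.card_le_card fun v _ => List.mem_toFinset.2 (hall v)
    have h2 := List.toFinset_card_le P
    have := hG.1
    simp at hruns
    omega
  have hreach := reach_bound hG hP hmax (by omega) hP0 hD hPD hD0
  have hDl : 0 < D.length := List.length_pos_iff.2 hD0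
  obtain ⟨h, hh⟩ : ∃ h, D.head? = some h := ⟨_, List.head?_eq_some_head hD0⟩
  obtain ⟨h', hh'⟩ : ∃ h', D.getLast? = some h' := ⟨_, List.getLast?_eq_some_getLast hD0⟩
  -- The ends of `D` have all their neighbours on `P` and `D`, as `D` cannot be extended.
  have hnb : ∀ E : List V, IsPL G E → P.Disjoint E → E.length = D.length → ∀ e, E.head? = some e →
      ∀ y, G.Adj e y → y ∈ P ∨ y ∈ E := by
    intro E hE hPE hEl e he y hy
    by_contra! hyn
    have := hDmax (y :: E) ⟨List.isChain_cons.2 ⟨by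
        intro z hz
        rw [he] at hz
        cases hz
        exact hy.symm, hE.1⟩, List.nodup_cons.2 ⟨hyn.2, hE.2⟩⟩ (by
      intro z hz hz'
      rcases List.mem_cons.1 hz' with rfl | h
      · exact hyn.1 hz
      · exact hPE hz h)
    simp only [List.length_cons] at this
    omega
  have d1 := le_card_Nb hG (hnb D hD hPD rfl h hh)
  have d2 := le_card_Nb hG (P := P) (D := D) (h := h') (by
    intro y hy
    have := hnb D.reverse hD.reverse (fun x hx hx' => hPD hx (List.mem_reverse.1 hx'))
      (by simp) h' (by simpa using hh') y hy
    simpa using this)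
  have hcases : D.length = 1 ∨ D.length = 2 ∨ 3 ≤ D.length := by omega
  rcases hcases with hj | hj | hj
  · rw [hj] at hruns hreach
    omega
  · have b1 := card_Nb_lt (G := G) (List.mem_of_head? hh)
    have b2 := card_Nb_lt (G := G) (List.mem_of_getLast? hh')
    obtain ⟨u, i, e1, e0, e2, e3⟩ := ends_bound hP hmax hD hPD hh hh' (by omega)
    rw [hj] at hruns b1 b2 e2 e3
    omega
  -- For `m = 0` the whole of `Q` would be off `P`, hence at most as long as `D`.
  · have hl := long_bound hG hP hmax (by omega) hP0 hD hPD hj hDmax hh hh' d1 d2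
    rcases Nat.eq_zero_or_pos m with rfl | hm
    · simp at hruns
      omega
    · omega

end Bounds

end TwoLongestPaths

/-! ### From walks to lists -/

open TwoLongestPaths in
theorem stmt_6 {V : Type*} [Fintype V] (G : SimpleGraph V) (k l : ℕ) (hk : 3 ≤ k)
    (hG : IsKConnected G k) {a b c d : V} (P : G.Walk a b) (Q : G.Walk c d)
    (hP : IsLongestPath G P) (hQ : IsLongestPath G Q)
    (hPl : P.length = l) (hQl : Q.length = l) :
    min (4 * (k : ℤ) - l - 3) (k : ℤ) ≤
      (({v | v ∈ P.support} ∩ {v | v ∈ Q.support}).ncard : ℤ) := by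
  classical
  have hmax : ∀ L, IsPL G L → L.length ≤ P.support.length := by
    intro L hL
    rcases eq_or_ne L [] with rfl | h0
    · simp
    · have h1 := hP.2 (Walk.ofSupport L h0 hL.1)
        (Walk.isPath_def _ |>.2 (by rw [Walk.support_ofSupport]; exact hL.2))
      rw [Walk.length_ofSupport] at h1
      rw [Walk.length_support]
      omega
  have hmain := list_bound hG ⟨P.isChain_adj_support, hP.1.support_nodup⟩ hmax (by omega)
    P.support_ne_nil (Q := Q.support) ⟨Q.isChain_adj_support, hQ.1.support_nodup⟩
    (by rw [Walk.length_support, Walk.length_support, hPl, hQl])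
  have hcard : ({v | v ∈ P.support} ∩ {v | v ∈ Q.support}).ncard
      = (Q.support.filter (fun x => x ∈ P.support)).length := by
    rw [← List.toFinset_card_of_nodup (hQ.1.support_nodup.filter _), ← Set.ncard_coe_finset]
    congr 1
    ext v
    simp [and_comm]
  rw [hcard]
  rw [Walk.length_support, hPl] at hmain
  omega
end

section
/- Let G be a k-connected finite simple graph with k ≥ 3, let P be a longest path in G of length ℓ, and let q q' be an edge of G with both endpoints q and q' not on P. Then ℓ ≥ 4k − 3 − |N_G({q, q'}) ∩ V(P)|, where N_G({q, q'}) is the set of vertices of G adjacent to q or to q'. -/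
/-!
Take `k` paths `W₁, …, W_k` from `q` to `P` that share only `q` and meet `P` only in their ends (a
fan, which exists by Menger's theorem). Replacing a segment of the longest path `P` by a detour
through `q` shows that the ends of `W_i` and `W_j` are at distance at least `|W_i| + |W_j|` on `P`,
and the end of `W_i` is at distance at least `|W_i|` from the ends of `P`, so `ℓ ≥ 2 ∑ |W_i|`.
Every `W_i` that is not a single edge contributes at least `4`.

A path `W_i` that is a single edge to a common neighbour of `q` and `q'` contributes `3` instead of
`2`: the detour from its end to the next end can go through `q'` and then `q`, unless the next path
itself passes through `q'`, which happens for at most one path. With `A` and `B` the sets of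
neighbours of `q` and `q'` on `P`, this gives `ℓ ≥ 4k - |A| - |A \ B| - 1`. By symmetry we may assume
`|A| ≤ |B|`, and then `|A| + |A \ B| ≤ |A ∪ B|`, so that `ℓ ≥ 4k - 1 - |A ∪ B|`.

Menger's theorem is proved by induction on the edges: if deleting an edge `xy` creates a separator
`S` of size `k - 1`, disjoint paths from `A` to `S ∪ {x}` and from `S ∪ {y}` to `B` are glued.
-/

open SimpleGraph

/-! ### Walks avoiding a set -/

/-- `u` and `v` are joined in `H` by a walk that avoids `S`, its ends included. -/
def Av {V : Type*} (H : SimpleGraph V) (S : Set V) (u v : V) : Prop :=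
  ∃ w : H.Walk u v, ∀ z ∈ w.support, z ∉ S

section
variable {V : Type*} {G H : SimpleGraph V} {S : Set V} {u v w x y : V}

lemma Av.trans (h₁ : Av H S u v) (h₂ : Av H S v w) : Av H S u w := by
  obtain ⟨p, hp⟩ := h₁
  obtain ⟨r, hr⟩ := h₂
  refine ⟨p.append r, fun z hz => ?_⟩
  rcases (Walk.mem_support_append_iff _ _).1 hz with h | h
  exacts [hp z h, hr z h]

lemma Av.refl (h : u ∉ S) : Av H S u u := ⟨Walk.nil, by simpa using h⟩

lemma Av.left (h : Av H S u v) : u ∉ S := by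
  obtain ⟨p, hp⟩ := h
  exact hp _ p.start_mem_support

lemma Av.right (h : Av H S u v) : v ∉ S := by
  obtain ⟨p, hp⟩ := h
  exact hp _ p.end_mem_support

lemma Av.symm (h : Av H S u v) : Av H S v u := by
  obtain ⟨p, hp⟩ := h
  exact ⟨p.reverse, by simpa using hp⟩

lemma Av.adj (h : H.Adj u v) (hu : u ∉ S) (hv : v ∉ S) : Av H S u v :=
  ⟨h.toWalk, by simp [Adj.toWalk, hu, hv]⟩

/-- A walk either avoids the edge `xy` altogether, or yields walks without `xy` from its start to
one end of that edge and from the other end of the edge to its end. -/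
lemma Av.split (x y : V) (h : Av G S u v) :
    Av (G.deleteEdges {s(x, y)}) S u v ∨
    (Av (G.deleteEdges {s(x, y)}) S u x ∧ Av (G.deleteEdges {s(x, y)}) S y v) ∨
    (Av (G.deleteEdges {s(x, y)}) S u y ∧ Av (G.deleteEdges {s(x, y)}) S x v) := by
  obtain ⟨p, hp⟩ := h
  induction p with
  | nil => exact Or.inl (Av.refl (hp _ (by simp)))
  | @cons a b c hab p ih =>
    have ha : a ∉ S := hp a (by simp)
    have hb : b ∉ S := hp b (by simp)
    have ih := ih fun z hz => hp z (by simp [hz])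
    by_cases he : s(a, b) = s(x, y)
    · rcases Sym2.eq_iff.1 he with ⟨rfl, rfl⟩ | ⟨rfl, rfl⟩
      · rcases ih with h | h | h
        · exact Or.inr (Or.inl ⟨Av.refl ha, h⟩)
        · exact Or.inr (Or.inl ⟨Av.refl ha, h.2⟩)
        · exact Or.inl h.2
      · rcases ih with h | h | h
        · exact Or.inr (Or.inr ⟨Av.refl ha, h⟩)
        · exact Or.inl h.2
        · exact Or.inr (Or.inr ⟨Av.refl ha, h.2⟩)
    · have hab' : Av (G.deleteEdges {s(x, y)}) S a b :=
        Av.adj (by simpa [deleteEdges_adj, hab] using he) ha hb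
      rcases ih with h | h | h
      · exact Or.inl (hab'.trans h)
      · exact Or.inr (Or.inl ⟨hab'.trans h.1, h.2⟩)
      · exact Or.inr (Or.inr ⟨hab'.trans h.1, h.2⟩)

end

/-- `S` meets every walk of `H` from `A` to `B`; it may contain elements of `A` and `B`. -/
def Separates {V : Type*} (H : SimpleGraph V) (A B : Set V) (S : Finset V) : Prop :=
  ∀ a ∈ A, ∀ b ∈ B, ¬ Av H S a b

/-- There are `k` pairwise vertex-disjoint paths of `H` from `A` to `B`. They may have other
vertices in `A` or `B` besides their ends. -/
def Linked {V : Type*} (H : SimpleGraph V) (A B : Set V) (k : ℕ) : Prop :=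
  ∃ (s t : Fin k → V) (w : ∀ i, H.Walk (s i) (t i)),
    (∀ i, s i ∈ A) ∧ (∀ i, t i ∈ B) ∧ (∀ i, (w i).IsPath) ∧
      ∀ i j, i ≠ j → ∀ z ∈ (w i).support, z ∉ (w j).support

/-! ### Menger's theorem -/

section
variable {V : Type*}

/-- The gluing step of Menger's theorem: `S` separates `A` from `B` once the edge `xy` is deleted,
one system of disjoint paths ends exactly in `S ∪ {x}`, the other starts exactly in `S ∪ {y}`.
A path of the first system and one of the second can only meet in `S`, so the two systems can be
joined at `S` and along the edge `xy`. -/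
lemma Linked.glue {G : SimpleGraph V} {A B : Set V} {k : ℕ} {x y : V} [DecidableEq V]
    (hxy : G.Adj x y) {S : Finset V}
    (hS : Separates (G.deleteEdges {s(x, y)}) A B S)
    (hxS : x ∉ S) (hyS : y ∉ S) (hcard : S.card + 1 = k)
    (h₁ : Linked (G.deleteEdges {s(x, y)}) A (insert x S : Finset V) k)
    (h₂ : Linked (G.deleteEdges {s(x, y)}) (insert y S : Finset V) B k) :
    Linked G A B k := by
  have hle : G.deleteEdges {s(x, y)} ≤ G := deleteEdges_le _
  obtain ⟨s, t, p, hs, ht, hp, hpd⟩ := h₁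
  obtain ⟨s', t', r, hs', ht', hr, hrd⟩ := h₂
  have tinj : Function.Injective t := fun i j hij => by
    by_contra hne
    exact hpd i j hne (t i) (Walk.end_mem_support _) (by rw [hij]; exact Walk.end_mem_support _)
  have sinj : Function.Injective s' := fun i j hij => by
    by_contra hne
    exact hrd i j hne (s' i) (Walk.start_mem_support _) (by rw [hij]; exact Walk.start_mem_support _)
  have tsurj : ∀ z ∈ insert x S, ∃ i, t i = z := by
    have : Finset.univ.image t = insert x S := by
      apply Finset.eq_of_subset_of_card_le
      · intro z hz
        obtain ⟨i, -, rfl⟩ := Finset.mem_image.1 hz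
        exact_mod_cast ht i
      · rw [Finset.card_image_of_injective _ tinj, Finset.card_insert_of_notMem hxS]
        simp [hcard]
    intro z hz
    rw [← this] at hz
    simpa using hz
  have ssurj : ∀ z ∈ insert y S, ∃ i, s' i = z := by
    have : Finset.univ.image s' = insert y S := by
      apply Finset.eq_of_subset_of_card_le
      · intro z hz
        obtain ⟨i, -, rfl⟩ := Finset.mem_image.1 hz
        exact_mod_cast hs' i
      · rw [Finset.card_image_of_injective _ sinj, Finset.card_insert_of_notMem hyS]
        simp [hcard]
    intro z hz
    rw [← this] at hz
    simpa using hz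
  -- every vertex of `S` is an end of a path of each system, so no path passes through `S` earlier
  have pS : ∀ i, ∀ z ∈ (p i).support, z ∈ S → z = t i := by
    intro i z hz hzS
    obtain ⟨j, rfl⟩ := tsurj z (by simp [hzS])
    by_contra hne
    exact hpd i j (by rintro rfl; exact hne rfl) _ hz (Walk.end_mem_support _)
  have rS : ∀ i, ∀ z ∈ (r i).support, z ∈ S → z = s' i := by
    intro i z hz hzS
    obtain ⟨j, rfl⟩ := ssurj z (by simp [hzS])
    by_contra hne
    exact hrd i j (by rintro rfl; exact hne rfl) _ hz (Walk.start_mem_support _)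
  have cross : ∀ i j, ∀ z ∈ (p i).support, z ∈ (r j).support → z ∈ S ∧ z = t i ∧ z = s' j := by
    intro i j z hz hz'
    by_cases hzS : z ∈ S
    · exact ⟨hzS, pS i z hz hzS, rS j z hz' hzS⟩
    exfalso
    refine hS _ (hs i) _ (ht' j) (Av.trans (v := z) ⟨(p i).takeUntil z hz, ?_⟩
      ⟨(r j).dropUntil z hz', ?_⟩)
    · intro v hv hvS
      have hvt := pS i v (Walk.support_takeUntil_subset_support _ _ hv) hvS
      subst hvt
      exact Walk.endpoint_notMem_support_takeUntil (hp i) hz (by rintro rfl; exact hzS hvS) hv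
    · intro v hv hvS
      have hvt := rS j v (Walk.support_dropUntil_subset_support _ _ hv) hvS
      have hrev : (((r j).takeUntil z hz').append ((r j).dropUntil z hz')).IsPath := by
        rw [Walk.take_spec]; exact hr j
      refine Walk.IsPath.ne_of_mem_support_of_append hrev (x := v) (y := v) ?_ ?_ hv rfl
      · subst hvt; rintro rfl; exact hzS hvS
      · rw [hvt]; exact Walk.start_mem_support _
  have link : ∀ i, ∃ j, (t i = s' j ∧ t i ∈ S) ∨ (t i = x ∧ s' j = y) := by
    intro i
    have := ht i
    simp only [Finset.coe_insert, Set.mem_insert_iff, Finset.mem_coe] at this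
    rcases this with h | h
    · obtain ⟨j, hj⟩ := ssurj y (by simp)
      exact ⟨j, Or.inr ⟨h, hj⟩⟩
    · obtain ⟨j, hj⟩ := ssurj (t i) (by simp [h])
      exact ⟨j, Or.inl ⟨hj.symm, h⟩⟩
  choose σ hσ using link
  have σinj : Function.Injective σ := by
    intro i j hij
    apply tinj
    rcases hσ i with h | h <;> rcases hσ j with h' | h'
    · rw [h.1, h'.1, hij]
    · rw [hij] at h; rw [h'.2] at h; exact absurd (h.1 ▸ h.2) hyS
    · rw [← hij] at h'; rw [h.2] at h'; exact absurd (h'.1 ▸ h'.2) hyS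
    · rw [h.1, h'.1]
  have comb : ∀ i, ∃ w : G.Walk (s i) (t' (σ i)), w.IsPath ∧
      ∀ z ∈ w.support, z ∈ (p i).support ∨ z ∈ (r (σ i)).support := by
    intro i
    have : ∃ w : G.Walk (t i) (s' (σ i)), ∀ z ∈ w.support, z = t i ∨ z = s' (σ i) := by
      rcases hσ i with h | h
      · exact ⟨Walk.nil.copy rfl h.1, by simp⟩
      · refine ⟨Walk.cons (by rw [h.1, h.2]; exact hxy) Walk.nil, by simp⟩
    obtain ⟨c, hc⟩ := this
    refine ⟨(((p i).mapLe hle).append (c.append ((r (σ i)).mapLe hle))).bypass,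
      Walk.bypass_isPath _, fun z hz => ?_⟩
    have hz := Walk.support_bypass_subset_support _ hz
    simp only [Walk.mem_support_append_iff, Walk.support_mapLe_eq_support] at hz
    rcases hz with h | h | h
    · exact Or.inl h
    · rcases hc z h with rfl | rfl
      · exact Or.inl (Walk.end_mem_support _)
      · exact Or.inr (Walk.start_mem_support _)
    · exact Or.inr h
  choose w hwp hw using comb
  have key : ∀ i j, i ≠ j → ∀ z ∈ (p i).support, z ∉ (r (σ j)).support := by
    intro i j hij z hz hz'
    obtain ⟨hzS, h1, h2⟩ := cross i (σ j) z hz hz'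
    rcases hσ j with h | h
    · exact hij (tinj (by rw [← h1, h2, h.1]))
    · rw [h2, h.2] at hzS; exact hyS hzS
  refine ⟨s, fun i => t' (σ i), w, hs, fun i => ht' _, hwp, fun i j hij z hz hz' => ?_⟩
  rcases hw i z hz with h | h <;> rcases hw j z hz' with h' | h'
  · exact hpd i j hij z h h'
  · exact key i j hij z h h'
  · exact key j i hij.symm z h' h
  · exact hrd _ _ (fun h => hij (σinj h)) z h h'

/-- If `S` separates `A` from `B` without the edge `xy`, and `y` is on the side of `B`, then a set
separating `A` from `S ∪ {x}` without `xy` also separates `A` from `B` in the whole graph. -/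
lemma Separates.of_left {G : SimpleGraph V} {A B : Set V} {x y : V} [DecidableEq V]
    {S T : Finset V} (hS : Separates (G.deleteEdges {s(x, y)}) A B S)
    (hT : Separates (G.deleteEdges {s(x, y)}) A (insert x S : Finset V) T)
    {b₀ : V} (hb₀ : b₀ ∈ B) (hy : Av (G.deleteEdges {s(x, y)}) S y b₀) :
    Separates G A B T := by
  intro a ha b hb hab
  have hit : ∀ c, Av (G.deleteEdges {s(x, y)}) T a c →
      ¬ Av (G.deleteEdges {s(x, y)}) S a c → False := by
    rintro c ⟨w, hw⟩ hc
    simp only [Av, not_exists, not_forall, not_not] at hc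
    obtain ⟨z, hz, hzS⟩ := hc w
    refine hT a ha z ?_ ⟨w.takeUntil z hz, fun v hv =>
      hw v (Walk.support_takeUntil_subset_support _ _ hv)⟩
    simp only [Finset.coe_insert]
    exact Or.inr hzS
  rcases hab.split x y with h | h | h
  · exact hit b h (hS a ha b hb)
  · exact hT a ha x (by simp) h.1
  · exact hit y h.1 fun h' => hS a ha b₀ hb₀ (h'.trans hy)

lemma Separates.symm {H : SimpleGraph V} {A B : Set V} {S : Finset V} (h : Separates H A B S) :
    Separates H B A S := fun a ha b hb hab => h b hb a ha hab.symm

/-- **Menger's theorem** for finite graphs, by induction on the edge set: if every set separating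
`A` from `B` has at least `k` elements, there are `k` disjoint paths from `A` to `B`. If deleting
`xy` creates a separator `S` with fewer than `k` elements, the induction hypothesis applies
to `A` and `S ∪ {x}`, and to `S ∪ {y}` and `B`, in the graph without `xy`. -/
theorem menger [Fintype V] (k : ℕ) (G : SimpleGraph V) (A B : Set V)
    (h : ∀ S : Finset V, Separates G A B S → k ≤ S.card) : Linked G A B k := by
  classical
  induction G using WellFoundedLT.induction generalizing A B with
  | _ G ih =>
  by_cases hG : G = ⊥
  · subst hG
    have hk : k ≤ (A ∩ B).toFinset.card := by
      apply h
      rintro a ha b hb ⟨w, hw⟩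
      cases w with
      | nil => exact hw a (by simp) (by simp [ha, hb])
      | cons h' _ => exact h'
    obtain ⟨U, hU, hUk⟩ := Finset.exists_subset_card_eq hk
    let e := (Finset.equivFinOfCardEq hUk).symm
    have he : ∀ i, (e i : V) ∈ A ∩ B := fun i => by simpa using hU (e i).2
    refine ⟨fun i => e i, fun i => e i, fun i => Walk.nil, fun i => (he i).1, fun i => (he i).2,
      fun i => Walk.IsPath.nil, fun i j hij z hz hz' => hij ?_⟩
    simp only [Walk.support_nil, List.mem_singleton] at hz hz'
    exact e.injective (Subtype.ext (hz.symm.trans hz'))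
  · obtain ⟨x, y, hxy⟩ : ∃ x y, G.Adj x y := by
      by_contra hcon
      push Not at hcon
      exact hG (by ext a b; simp [hcon a b])
    have hlt : ∀ x y, G.Adj x y → G.deleteEdges {s(x, y)} < G := fun x y hxy =>
      lt_of_le_of_ne (deleteEdges_le _) fun heq => by
        have := hxy
        rw [← heq] at this
        simp [deleteEdges_adj] at this
    by_cases hsep : ∀ S : Finset V, Separates (G.deleteEdges {s(x, y)}) A B S → k ≤ S.card
    · obtain ⟨s, t, w, hs, ht, hw, hd⟩ := ih _ (hlt x y hxy) A B hsep
      exact ⟨s, t, fun i => (w i).mapLe (deleteEdges_le _), hs, ht,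
        fun i => (Walk.isPath_mapLe _).2 (hw i), by simpa using hd⟩
    push Not at hsep
    obtain ⟨S, hS, hSk⟩ := hsep
    have hnot : ¬ Separates G A B S := fun h' => absurd (h S h') (by omega)
    simp only [Separates, not_forall, not_not] at hnot
    obtain ⟨a₀, ha₀, b₀, hb₀, hab⟩ := hnot
    -- orient the edge so that `x` lies on the side of `A`
    have main : ∀ x y, G.Adj x y → Separates (G.deleteEdges {s(x, y)}) A B S →
        Av (G.deleteEdges {s(x, y)}) S a₀ x → Av (G.deleteEdges {s(x, y)}) S y b₀ →
        Linked G A B k := by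
      intro x y hxy hS hax hyb
      have e1 : G.deleteEdges {s(y, x)} = G.deleteEdges {s(x, y)} := by rw [Sym2.eq_swap]
      have l1 : ∀ T : Finset V, Separates (G.deleteEdges {s(x, y)}) A (insert x S : Finset V) T →
          k ≤ T.card := fun T hT => h T (hS.of_left hT hb₀ hyb)
      have l2 : ∀ T : Finset V, Separates (G.deleteEdges {s(x, y)}) (insert y S : Finset V) B T →
          k ≤ T.card := by
        intro T hT
        refine h T (Separates.symm ?_)
        refine Separates.of_left (x := y) (y := x) (S := S) ?_ ?_ ha₀ ?_
        · rw [e1]; exact hS.symm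
        · rw [e1]; exact hT.symm
        · rw [e1]; exact hax.symm
      have hxS : x ∉ S := fun h => hax.right (by exact_mod_cast h)
      have hyS : y ∉ S := fun h => hyb.left (by exact_mod_cast h)
      have hc : k ≤ (insert x S).card := l1 _ fun a _ b hb hab => hab.right hb
      rw [Finset.card_insert_of_notMem hxS] at hc
      exact Linked.glue hxy hS hxS hyS (by omega) (ih _ (hlt x y hxy) _ _ l1)
        (ih _ (hlt x y hxy) _ _ l2)
    rcases hab.split x y with h' | h' | h'
    · exact absurd h' (hS _ ha₀ _ hb₀)
    · exact main x y hxy hS h'.1 h'.2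
    · have e1 : G.deleteEdges {s(x, y)} = G.deleteEdges {s(y, x)} := by rw [Sym2.eq_swap]
      rw [e1] at hS h'
      exact main y x hxy.symm hS h'.1 h'.2
end

/-! ### Rerouting a longest path -/

section
variable {V : Type*} {G : SimpleGraph V}

lemma isPath_append {u v w : V} {p : G.Walk u v} {r : G.Walk v w} (hp : p.IsPath) (hr : r.IsPath)
    (h : ∀ z ∈ p.support, z ∈ r.support → z = v) : (p.append r).IsPath := by
  rw [Walk.isPath_def, Walk.support_append]
  have hr' := hr.support_nodup
  rw [← Walk.cons_tail_support, List.nodup_cons] at hr'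
  refine List.Nodup.append hp.support_nodup hr'.2 fun z hz hz' => ?_
  obtain rfl := h z hz (List.mem_of_mem_tail hz')
  exact hr'.1 hz'

lemma mem_take {u v : V} {p : G.Walk u v} {i : ℕ} {z : V} (h : z ∈ (p.take i).support) :
    ∃ m, m ≤ i ∧ m ≤ p.length ∧ p.getVert m = z := by
  obtain ⟨n, hn, hn'⟩ := Walk.mem_support_iff_exists_getVert.1 h
  rw [Walk.take_getVert] at hn
  rw [Walk.take_length] at hn'
  exact ⟨_, min_le_left _ _, by omega, hn⟩

lemma mem_drop {u v : V} {p : G.Walk u v} {i : ℕ} {z : V} (hi : i ≤ p.length)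
    (h : z ∈ (p.drop i).support) : ∃ m, i ≤ m ∧ m ≤ p.length ∧ p.getVert m = z := by
  obtain ⟨n, hn, hn'⟩ := Walk.mem_support_iff_exists_getVert.1 h
  rw [Walk.drop_getVert] at hn
  rw [Walk.drop_length] at hn'
  exact ⟨_, Nat.le_add_right i n, by omega, hn⟩

/-- A path `R` joining two vertices of a longest path `P`, and otherwise disjoint from `P`, is at
most as long as the segment of `P` it can replace. -/
lemma IsLongestPath.gap {a b : V} {P : G.Walk a b} (hP : IsLongestPath G P) {i j : ℕ}
    (hij : i < j) (hj : j ≤ P.length) {R : G.Walk (P.getVert i) (P.getVert j)} (hR : R.IsPath)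
    (h : ∀ z ∈ R.support, z ∈ P.support → z = P.getVert i ∨ z = P.getVert j) :
    i + R.length ≤ j := by
  have inj : ∀ m n, m ≤ P.length → n ≤ P.length → P.getVert m = P.getVert n → m = n :=
    fun m n hm hn h => hP.1.getVert_injOn hm hn h
  have h1 : (R.append (P.drop j)).IsPath := by
    refine isPath_append hR (hP.1.drop j) fun z hz hz' => ?_
    obtain ⟨m, hm, hm', rfl⟩ := mem_drop hj hz'
    refine (h _ hz (Walk.getVert_mem_support _ _)).resolve_left fun h => ?_
    have := inj _ _ hm' (by omega) h
    omega
  have h2 : ((P.take i).append (R.append (P.drop j))).IsPath := by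
    refine isPath_append (hP.1.take i) h1 fun z hz hz' => ?_
    obtain ⟨m, hm, hm', rfl⟩ := mem_take hz
    rcases (Walk.mem_support_append_iff _ _).1 hz' with hz' | hz'
    · refine (h _ hz' (Walk.getVert_mem_support _ _)).resolve_right fun h => ?_
      have := inj _ _ hm' hj h
      omega
    · obtain ⟨n, hn, hn', h⟩ := mem_drop hj hz'
      have := inj _ _ hn' hm' h
      omega
  have := hP.2 _ h2
  simp only [Walk.length_append, Walk.take_length, Walk.drop_length] at this
  omega

/-- A path `R` meeting a longest path `P` only in its last vertex is at most as long as each of the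
two segments of `P` that it can replace. -/
lemma IsLongestPath.ends {a b : V} {P : G.Walk a b} (hP : IsLongestPath G P) {i : ℕ}
    (hi : i ≤ P.length) {u : V} {R : G.Walk u (P.getVert i)} (hR : R.IsPath)
    (h : ∀ z ∈ R.support, z ∈ P.support → z = P.getVert i) :
    R.length ≤ i ∧ i + R.length ≤ P.length := by
  have h1 : (R.append (P.drop i)).IsPath := by
    refine isPath_append hR (hP.1.drop i) fun z hz hz' => ?_
    obtain ⟨m, hm, hm', rfl⟩ := mem_drop hi hz'
    exact h _ hz (Walk.getVert_mem_support _ _)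
  have h2 : ((P.take i).append R.reverse).IsPath := by
    refine isPath_append (hP.1.take i) hR.reverse fun z hz hz' => ?_
    obtain ⟨m, hm, hm', rfl⟩ := mem_take hz
    exact h _ (by simpa using hz') (Walk.getVert_mem_support _ _)
  have h1 := hP.2 _ h1
  have h2 := hP.2 _ h2
  simp only [Walk.length_append, Walk.take_length, Walk.drop_length, Walk.length_reverse] at h1 h2
  omega

/-! ### Fans in a `k`-connected graph -/

variable [Fintype V]

lemma IsKConnected.av {k : ℕ} (hG : IsKConnected G k) {S : Finset V} (hS : S.card < k) {u v : V}
    (hu : u ∉ S) (hv : v ∉ S) : Av G S u v := by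
  obtain ⟨w⟩ := (hG.2 S hS).preconnected ⟨u, by simpa using hu⟩ ⟨v, by simpa using hv⟩
  suffices h : ∀ {x y} (_ : (G.induce ((↑S : Set V)ᶜ)).Walk x y), Av G S x y from h w
  intro x y w
  induction w with
  | @nil x => exact Av.refl x.2
  | @cons x y z h _ ih => exact (Av.adj (H := G) (induce_adj.1 h) x.2 y.2).trans ih

/-- The fan lemma: from a vertex `q` outside a set `X` of at least `k` vertices there are `k` paths
to `X` that meet pairwise only in `q` and meet `X` only in their ends. It follows from
Menger's theorem applied to the neighbours of `q` and `X` in the graph without `q`. -/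
lemma IsKConnected.fan {k : ℕ} (hG : IsKConnected G k) (X : Finset V) (hX : k ≤ X.card) {q : V}
    (hq : q ∉ X) : ∃ (e : Fin k → V) (W : ∀ i, G.Walk q (e i)), (∀ i, e i ∈ X) ∧
      (∀ i, (W i).IsPath) ∧ (∀ i, ∀ z ∈ (W i).support, z ∈ X → z = e i) ∧
      ∀ i j, i ≠ j → ∀ z ∈ (W i).support, z ∈ (W j).support → z = q := by
  classical
  -- `H` is `G` with the vertex `q` isolated
  let H : SimpleGraph V :=
    { Adj := fun u v => G.Adj u v ∧ u ≠ q ∧ v ≠ q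
      symm := ⟨fun u v h => ⟨h.1.symm, h.2.2, h.2.1⟩⟩
      loopless := ⟨fun u h => G.irrefl h.1⟩ }
  have hHG : H ≤ G := fun u v h => h.1
  have avoid : ∀ {u v : V} (w : H.Walk u v), u ≠ q → q ∉ w.support := by
    intro u v w
    induction w with
    | nil => intro h; simpa using h.symm
    | cons h p ih =>
      intro hu
      simp only [Walk.support_cons, List.mem_cons, not_or]
      exact ⟨hu.symm, ih h.2.2⟩
  have lift : ∀ {u v : V} (w : G.Walk u v), q ∉ w.support →
      ∃ w' : H.Walk u v, w'.support = w.support := by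
    intro u v w
    induction w with
    | nil => intro h; exact ⟨Walk.nil, rfl⟩
    | cons h p ih =>
      intro hq
      simp only [Walk.support_cons, List.mem_cons, not_or] at hq
      obtain ⟨w', hw'⟩ := ih hq.2
      refine ⟨Walk.cons ⟨h, Ne.symm hq.1, ?_⟩ w', by simp [hw']⟩
      rintro rfl
      exact hq.2 p.start_mem_support
  have hL : Linked H {v | G.Adj q v} X k := by
    apply menger
    intro S hS
    by_contra! hlt
    have hlt' : (S.erase q).card < k := lt_of_le_of_lt (Finset.card_erase_le) hlt
    obtain ⟨p, hpX, hpS⟩ := Finset.exists_mem_notMem_of_card_lt_card (hlt.trans_le hX)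
    obtain ⟨w, hw⟩ := hG.av hlt' (u := q) (v := p) (by simp) (by simp [hpS])
    have hbp := w.bypass_isPath
    have hbs := w.support_bypass_subset_support
    generalize w.bypass = w' at hbp hbs
    cases w' with
    | nil => exact hq hpX
    | cons h r =>
      rw [Walk.cons_isPath_iff] at hbp
      obtain ⟨r', hr'⟩ := lift r hbp.2
      refine hS _ h p hpX ⟨r', fun z hz hzS => hw z (hbs ?_) ?_⟩
      · rw [hr'] at hz; simp [hz]
      · have : z ≠ q := by rintro rfl; exact hbp.2 (hr' ▸ hz)
        simpa [this] using hzS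
  obtain ⟨s, t, w, hs, ht, hw, hd⟩ := hL
  have trim : ∀ i, ∃ (e : V) (r : G.Walk q e), e ∈ X ∧ r.IsPath ∧
      (∀ z ∈ r.support, z ∈ X → z = e) ∧ ∀ z ∈ r.support, z = q ∨ z ∈ (w i).support := by
    intro i
    obtain ⟨x, hxX, hx, hemp⟩ :=
      (w i).exists_mem_support_mem_erase_mem_support_takeUntil_eq_empty X
        ⟨t i, by simpa using ht i⟩
    have hsub := (w i).support_takeUntil_subset_support hx
    have hqn := avoid (w i) (G.ne_of_adj (hs i)).symm
    refine ⟨x, Walk.cons (hs i) (((w i).takeUntil x hx).mapLe hHG), hxX, ?_, ?_, ?_⟩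
    · rw [Walk.cons_isPath_iff, Walk.isPath_mapLe, Walk.support_mapLe_eq_support]
      exact ⟨(hw i).takeUntil hx, fun h => hqn (hsub h)⟩
    · intro z hz hzX
      simp only [Walk.support_cons, Walk.support_mapLe_eq_support, List.mem_cons] at hz
      rcases hz with rfl | hz
      · exact absurd hzX hq
      · by_contra hne
        have : z ∈ (∅ : Finset V) := by
          rw [← hemp]; simp [hne, hzX, hz]
        simp at this
    · intro z hz
      simp only [Walk.support_cons, Walk.support_mapLe_eq_support, List.mem_cons] at hz
      exact hz.imp_right fun h => hsub h
  choose e W he hW hWX hWw using trim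
  refine ⟨e, W, he, hW, hWX, fun i j hij z hz hz' => ?_⟩
  rcases hWw i z hz with h | h
  · exact h
  rcases hWw j z hz' with h' | h'
  · exact h'
  · exact absurd h' (hd i j hij z h)

/-- If a longest path that misses a vertex had fewer than `k` vertices, its start could be joined to
that vertex avoiding the rest of the path, and the path could be extended. -/
lemma IsKConnected.le_card_support {k : ℕ} (hG : IsKConnected G k) {a b : V} {P : G.Walk a b}
    (hP : IsLongestPath G P) {q : V} (hq : q ∉ P.support) [DecidableEq V] :
    k ≤ P.support.toFinset.card := by
  by_contra! hlt
  have ha : a ∈ P.support.toFinset := by simp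
  have hlt' : (P.support.toFinset.erase a).card < k := lt_of_le_of_lt (Finset.card_erase_le) hlt
  obtain ⟨w, hw⟩ := hG.av hlt' (u := a) (v := q) (by simp) (by simp [hq])
  cases w with
  | nil => exact hq (by simp)
  | @cons _ c _ h r =>
    have hc : c ∉ P.support := fun hc =>
      hw c (by simp) (by simp [hc, (G.ne_of_adj h).symm])
    have := hP.2 (Walk.cons h.symm P) ((Walk.cons_isPath_iff _ _).2 ⟨hP.1, hc⟩)
    simp at this

/-! ### The length bound -/

/-- A bound in terms of the neighbours on `P` of `q`, and of those among them that are not neighbours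
of `q'`. Each path of a fan from `q` to `P` is given an interval around the position of its end,
of radius its length, one longer on the right if its end is adjacent to both `q` and `q'`
and one shorter on the left if it passes through `q'`. These intervals are disjoint. -/
lemma four_mul_le [DecidableEq V] [DecidableRel G.Adj] {k : ℕ} (hG : IsKConnected G k) {a b : V}
    {P : G.Walk a b}
    (hP : IsLongestPath G P) {q q' : V} (hqq' : G.Adj q q') (hq : q ∉ P.support)
    (hq' : q' ∉ P.support) :
    4 * k ≤ P.length + 1 + {v ∈ P.support.toFinset | G.Adj q v}.card +
      ({v ∈ P.support.toFinset | G.Adj q v ∧ ¬ G.Adj q' v}).card := by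
  obtain ⟨e, W, he, hW, hWX, hd⟩ := hG.fan P.support.toFinset (hG.le_card_support hP hq)
    (q := q) (by simpa using hq)
  simp only [List.mem_toFinset] at he hWX
  have hpos : ∀ i, ∃ m, P.getVert m = e i ∧ m ≤ P.length := fun i =>
    Walk.mem_support_iff_exists_getVert.1 (he i)
  choose pos hpe hpl using hpos
  obtain rfl : (fun i => P.getVert (pos i)) = e := funext hpe
  clear hpe
  have hPos : ∀ i j, i ≠ j → P.getVert (pos i) ≠ P.getVert (pos j) := by
    intro i j hij h
    have := hd i j hij (P.getVert (pos i)) (Walk.end_mem_support _)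
      (by rw [h]; exact Walk.end_mem_support _)
    exact hq (this ▸ Walk.getVert_mem_support _ _)
  have hlen : ∀ i, 1 ≤ (W i).length := by
    intro i
    by_contra! h0
    have := Walk.eq_of_length_eq_zero (p := W i) (by omega)
    exact hq (by rw [this]; exact Walk.getVert_mem_support _ _)
  have hadj : ∀ i, (W i).length = 1 → G.Adj q (P.getVert (pos i)) := fun i h =>
    Walk.adj_of_length_eq_one h
  -- `d` marks the paths that are single edges, `β` those among them whose end is also adjacent
  -- to `q'`, and `J` the path through `q'`, if there is one
  let d : Fin k → ℕ := fun i => if (W i).length = 1 then 1 else 0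
  let β : Fin k → ℕ := fun i =>
    if (W i).length = 1 ∧ G.Adj q' (P.getVert (pos i)) then 1 else 0
  let J : Fin k → ℕ := fun i => if q' ∈ (W i).support then 1 else 0
  have hl1 : ∀ i, (W i).length ≤ pos i := fun i => (hP.ends (hpl i) (hW i) (hWX i)).1
  have hl2 : ∀ i, pos i + (W i).length + β i ≤ P.length := by
    intro i
    by_cases hi : (W i).length = 1 ∧ G.Adj q' (P.getVert (pos i))
    · have h2 := (hP.ends (hpl i) (R := Walk.cons hqq' (Walk.cons hi.2 Walk.nil)) ?_ ?_).2
      · simp only [β, if_pos hi]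
        simp only [Walk.length_cons, Walk.length_nil] at h2
        omega
      · have h3 : q ≠ P.getVert (pos i) := by
          intro h; exact hq (h ▸ Walk.getVert_mem_support _ _)
        have h4 := G.ne_of_adj hqq'
        have h5 := G.ne_of_adj hi.2
        simp [Walk.cons_isPath_iff, h3, h4, h5]
      · intro z hz hzP
        simp only [Walk.support_cons, Walk.support_nil, List.mem_cons, List.not_mem_nil,
          or_false] at hz
        rcases hz with rfl | rfl | rfl
        · exact absurd hzP hq
        · exact absurd hzP hq'
        · rfl
    · have := (hP.ends (hpl i) (hW i) (hWX i)).2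
      simpa only [β, if_neg hi, add_zero] using this
  have hgap : ∀ i j, pos i < pos j →
      pos i + (W i).length + β i + (W j).length ≤ pos j + J j := by
    intro i j hij
    -- the detour through `q` has length `(W i).length + (W j).length`; it can be lengthened by
    -- entering `q` from `q'` when the end of `W i` is adjacent to `q'` and `W j` avoids `q'`
    have hne : i ≠ j := by rintro rfl; exact lt_irrefl _ hij
    by_cases hi : ((W i).length = 1 ∧ G.Adj q' (P.getVert (pos i))) ∧ q' ∉ (W j).support
    · have hmem : P.getVert (pos i) ∉ (W j).support := fun h =>
        hPos i j hne (hWX j _ h (Walk.getVert_mem_support _ _))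
      have := hP.gap hij (hpl j)
        (R := Walk.cons hi.1.2.symm (Walk.cons hqq'.symm (W j))) ?_ ?_
      · simp only [Walk.length_cons] at this
        simp only [β, J, if_pos hi.1, if_neg hi.2]
        omega
      · have h5 := (G.ne_of_adj hi.1.2).symm
        simp [Walk.cons_isPath_iff, h5, hmem, hi.2, hW j]
      · intro z hz hzP
        simp only [Walk.support_cons, List.mem_cons] at hz
        rcases hz with rfl | rfl | hz
        · exact Or.inl rfl
        · exact absurd hzP hq'
        · exact Or.inr (hWX j z hz hzP)
    · have := hP.gap hij (hpl j) (R := (W i).reverse.append (W j)) ?_ ?_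
      · have hb : β i ≤ J j := by
          simp only [β, J]
          split_ifs with h1 h2 <;> first | omega | exact absurd ⟨h1, h2⟩ hi
        simp only [Walk.length_append, Walk.length_reverse] at this
        omega
      · refine isPath_append (hW i).reverse (hW j) fun z hz hz' => ?_
        exact hd i j hne z (by simpa using hz) hz'
      · intro z hz hzP
        rcases (Walk.mem_support_append_iff _ _).1 hz with hz | hz
        · exact Or.inl (hWX i z (by simpa using hz) hzP)
        · exact Or.inr (hWX j z hz hzP)
  have hsum : ∑ i, (pos i + (W i).length + β i - (pos i - (W i).length + J i)) ≤ P.length := by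
    have hdis : ∀ i ∈ (Finset.univ : Finset (Fin k)), ∀ j ∈ (Finset.univ : Finset (Fin k)),
        i ≠ j → Disjoint
          (Finset.Ioc (pos i - (W i).length + J i) (pos i + (W i).length + β i))
          (Finset.Ioc (pos j - (W j).length + J j) (pos j + (W j).length + β j)) := by
      intro i _ j _ hij
      rw [Finset.disjoint_left]
      intro z hz hz'
      rw [Finset.mem_Ioc] at hz hz'
      have h1 := hl1 i
      have h2 := hl1 j
      rcases lt_trichotomy (pos i) (pos j) with h | h | h
      · have := hgap i j h
        omega
      · exact hPos i j hij (by rw [h])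
      · have := hgap j i h
        omega
    calc _ = (Finset.univ.biUnion fun i =>
          Finset.Ioc (pos i - (W i).length + J i) (pos i + (W i).length + β i)).card := by
          rw [Finset.card_biUnion hdis]
          simp
      _ ≤ (Finset.Ioc 0 P.length).card := by
          apply Finset.card_le_card
          intro z hz
          simp only [Finset.mem_biUnion, Finset.mem_univ, true_and, Finset.mem_Ioc] at hz ⊢
          obtain ⟨i, hz⟩ := hz
          have := hl2 i
          omega
      _ = P.length := by simp
  have hterm : ∀ i, 4 + β i ≤
      (pos i + (W i).length + β i - (pos i - (W i).length + J i)) + 2 * d i + J i := by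
    intro i
    have h1 := hlen i
    have h2 := hl1 i
    by_cases h : (W i).length = 1
    · simp only [d, if_pos h]
      omega
    · simp only [d, if_neg h]
      omega
  have htot := Finset.sum_le_sum fun i (_ : i ∈ Finset.univ) => hterm i
  simp only [Finset.sum_add_distrib, ← Finset.mul_sum, Finset.sum_const, Finset.card_univ,
    Fintype.card_fin, smul_eq_mul] at htot
  have hJ : ∑ i, J i ≤ 1 := by
    simp only [J, Finset.sum_boole, Nat.cast_id]
    rw [Finset.card_le_one]
    intro i hi j hj
    by_contra hij
    exact (G.ne_of_adj hqq') (hd i j hij q' (by simpa using hi) (by simpa using hj)).symm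
  have hinj : Function.Injective fun i => P.getVert (pos i) := fun i j h => by
    by_contra hij
    exact hPos i j hij h
  have hdA : ∑ i, d i ≤ {v ∈ P.support.toFinset | G.Adj q v}.card := by
    simp only [d, Finset.sum_boole, Nat.cast_id]
    refine Finset.card_le_card_of_injOn _ (fun i hi => ?_) hinj.injOn
    simpa using hadj i (by simpa using hi)
  have hdB : ∑ i, d i ≤ ∑ i, β i +
      {v ∈ P.support.toFinset | G.Adj q v ∧ ¬ G.Adj q' v}.card := by
    simp only [d, β, Finset.sum_boole, Nat.cast_id]
    rw [← Finset.card_filter_add_card_filter_not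
      (s := ({i | (W i).length = 1} : Finset (Fin k))) (fun i => G.Adj q' (P.getVert (pos i))),
      Finset.filter_filter, Finset.filter_filter]
    refine Nat.add_le_add_left (Finset.card_le_card_of_injOn _ (fun i hi => ?_) hinj.injOn) _
    have hi : (W i).length = 1 ∧ ¬ G.Adj q' (P.getVert (pos i)) := by simpa using hi
    simpa using ⟨hadj i hi.1, hi.2⟩
  omega
end

theorem stmt_7 {V : Type*} [Fintype V] (G : SimpleGraph V) (k l : ℕ) (hk : 3 ≤ k)
    (hG : IsKConnected G k) {a b : V} (P : G.Walk a b)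
    (hP : IsLongestPath G P) (hPl : P.length = l)
    (q q' : V) (hqq' : G.Adj q q') (hq : q ∉ P.support) (hq' : q' ∉ P.support) :
    4 * (k : ℤ) - 3 - ({v | (G.Adj q v ∨ G.Adj q' v) ∧ v ∈ P.support}.ncard : ℤ) ≤
      (l : ℤ) := by
  classical
  have hN : {v | (G.Adj q v ∨ G.Adj q' v) ∧ v ∈ P.support} =
      (({v ∈ P.support.toFinset | G.Adj q v} ∪ {v ∈ P.support.toFinset | G.Adj q' v} :
        Finset V) : Set V) := by
    ext v
    simp
    tauto
  rw [hN, Set.ncard_coe_finset]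
  -- with `A`, `B` the neighbours of `q`, `q'` on `P`, the sum of the two bounds contains
  -- `|A| + |B \ A| = |B| + |A \ B| = |A ∪ B|`, so one of them gives the claim
  have h1 := four_mul_le hG hP hqq' hq hq'
  have h2 := four_mul_le hG hP hqq'.symm hq' hq
  have hsd : ∀ r r' : V, ({v ∈ P.support.toFinset | G.Adj r v ∧ ¬ G.Adj r' v}) =
      {v ∈ P.support.toFinset | G.Adj r v} \ {v ∈ P.support.toFinset | G.Adj r' v} := by
    intro r r'
    ext v
    simp
    tauto
  rw [hsd] at h1 h2
  have h3 := Finset.card_union_add_card_inter {v ∈ P.support.toFinset | G.Adj q v}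
    {v ∈ P.support.toFinset | G.Adj q' v}
  have h4 := Finset.card_sdiff_add_card_inter {v ∈ P.support.toFinset | G.Adj q v}
    {v ∈ P.support.toFinset | G.Adj q' v}
  have h5 := Finset.card_sdiff_add_card_inter {v ∈ P.support.toFinset | G.Adj q' v}
    {v ∈ P.support.toFinset | G.Adj q v}
  rw [Finset.inter_comm] at h5
  omega
end

section
/- Let G be a finite simple graph, let P and Q be longest paths in G, and suppose Q has vertex sequence q_0 q_1 ⋯ q_ℓ with both q_0 and q_1 not on P. Then |N_G({q_0, q_1}) ∩ V(P)| ≤ |V(P) ∩ V(Q)|, where N_G({q_0, q_1}) is the set of vertices of G adjacent to q_0 or to q_1. -/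
/-!
Vertices of `P` adjacent to `q₀` or `q₁` inject into the common vertices of `P` and `Q`.
By maximality of `P`, no two such vertices are consecutive on `P` (otherwise `q₀`, `q₁` or both
could be inserted between them), and none of them is the last vertex of `P`. A vertex `v` of this
kind lying on `Q` is sent to itself. If `v` is off `Q`, maximality of `Q` shows that `v` is not
adjacent to `q₀`, hence is adjacent to `q₁`, and that the successor `w` of `v` on `P` lies on `Q`,
since otherwise `w v q₁ q₂ ⋯` would be longer than `Q`; send `v` to `w`. As `w` is not itself
adjacent to `q₀` or `q₁`, the map is injective.

Paths are handled through their vertex lists: duplicate-free lists that are chains for adjacency.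
-/

open SimpleGraph

lemma IsLongestPath.length_le {V : Type*} {G : SimpleGraph V} {u v : V} {p : G.Walk u v}
    (hp : IsLongestPath G p) (l : List V) (hc : l.IsChain G.Adj) (hn : l.Nodup) :
    l.length ≤ p.support.length := by
  by_cases hl : l = []
  · simp [hl]
  · have h := hp.2 (Walk.ofSupport l hl hc)
      ((Walk.isPath_def _).2 (by rwa [Walk.support_ofSupport]))
    rw [Walk.length_ofSupport] at h
    rw [Walk.length_support]
    omega

/-- Two vertices attached to `{x, y}`, where `x y` is an edge off a maximal path, are not
consecutive on that path: otherwise `x`, `y` or both could be inserted between them. -/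
lemma not_attached_of_consecutive {V : Type*} {G : SimpleGraph V} {x y v w : V} {s t : List V}
    (hc : (s ++ v :: w :: t).IsChain G.Adj) (hn : (s ++ v :: w :: t).Nodup)
    (hmax : ∀ l : List V, l.IsChain G.Adj → l.Nodup → l.length ≤ (s ++ v :: w :: t).length)
    (hxy : G.Adj x y) (hx : x ∉ s ++ v :: w :: t) (hy : y ∉ s ++ v :: w :: t)
    (hv : G.Adj x v ∨ G.Adj y v) : ¬ (G.Adj x w ∨ G.Adj y w) := by
  have hne := hxy.ne
  have key : ∀ m : List V, (s ++ v :: (m ++ w :: t)).IsChain G.Adj →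
      (s ++ v :: (m ++ w :: t)).Nodup → m = [] := by
    intro m h1 h2
    have := hmax _ h1 h2
    simp only [List.length_append, List.length_cons] at this
    exact List.length_eq_zero_iff.1 (by omega)
  intro hw
  have k1 := key [x]
  have k2 := key [y]
  have k3 := key [x, y]
  have k4 := key [y, x]
  simp only [List.isChain_append, List.isChain_cons_cons, List.cons_append, List.nil_append,
    List.nodup_append, List.nodup_cons, List.mem_cons, List.mem_append, List.head?_cons,
    Option.mem_some_iff] at *
  rcases hv with hv | hv <;> rcases hw with hw | hw
  all_goals have hv' := hv.symm
  all_goals have hxy' := hxy.symm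
  all_goals grind

theorem stmt_8 {V : Type*} [Fintype V] (G : SimpleGraph V)
    {a b c d : V} (P : G.Walk a b) (Q : G.Walk c d)
    (hP : IsLongestPath G P) (hQ : IsLongestPath G Q) (hQlen : 1 ≤ Q.length)
    (h0 : Q.getVert 0 ∉ P.support) (h1 : Q.getVert 1 ∉ P.support) :
    {v | (G.Adj (Q.getVert 0) v ∨ G.Adj (Q.getVert 1) v) ∧ v ∈ P.support}.ncard ≤
      ({v | v ∈ P.support} ∩ {v | v ∈ Q.support}).ncard := by
  have hPc : P.support.IsChain G.Adj := P.isChain_adj_support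
  have hPn : P.support.Nodup := hP.1.support_nodup
  have hQc : Q.support.IsChain G.Adj := Q.isChain_adj_support
  have hQn : Q.support.Nodup := hQ.1.support_nodup
  have hPmax := hP.length_le
  have hQmax := hQ.length_le
  obtain ⟨M, hM⟩ : ∃ M, Q.support = Q.getVert 0 :: Q.getVert 1 :: M := by
    cases Q with
    | nil => simp at hQlen
    | cons h q => cases q <;> simp
  generalize Q.getVert 0 = x at *
  generalize Q.getVert 1 = y at *
  generalize P.support = L at *
  generalize Q.support = K at *
  subst hM
  have hxy : G.Adj x y := (List.isChain_cons_cons.1 hQc).1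
  have succ : ∀ v, (G.Adj x v ∨ G.Adj y v) → v ∈ L → v ∉ x :: y :: M →
      ∃ w s t, L = s ++ v :: w :: t ∧ w ∈ x :: y :: M := by
    intro v hv hvL hvK
    -- An edge from `v` to the first vertex of `Q` would extend `Q`.
    have hxv : ¬ G.Adj x v := by
      intro h
      have := hQmax (v :: x :: y :: M) (List.isChain_cons_cons.2 ⟨h.symm, hQc⟩)
        (List.nodup_cons.2 ⟨hvK, hQn⟩)
      simp at this
    have hyv : G.Adj y v := hv.resolve_left hxv
    obtain ⟨s, t, rfl⟩ := List.append_of_mem hvL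
    cases t with
    | nil =>
      have := hPmax (s ++ [v] ++ [y])
        (List.isChain_append.2 ⟨hPc, by simp, by simpa using hyv.symm⟩)
        (by rw [List.nodup_append]; exact ⟨hPn, by simp, by grind⟩)
      simp at this
    | cons w t =>
      refine ⟨w, s, t, rfl, ?_⟩
      by_contra hw
      have hvw : G.Adj v w := by
        simp only [List.isChain_append, List.isChain_cons_cons] at hPc
        exact hPc.2.1.1
      have := hQmax (w :: v :: y :: M)
        (by simp only [List.isChain_cons_cons] at hQc ⊢
            exact ⟨hvw.symm, hyv.symm, hQc.2⟩)
        (by have := hvw.ne; grind)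
      simp at this
  classical
  choose! f s t hf hfK using succ
  have hfN : ∀ v, (G.Adj x v ∨ G.Adj y v) → v ∈ L → v ∉ x :: y :: M →
      ¬ (G.Adj x (f v) ∨ G.Adj y (f v)) := by
    intro v hv hvL hvK
    have h := hf v hv hvL hvK
    rw [h] at hPc hPn hPmax h0 h1
    exact not_attached_of_consecutive hPc hPn hPmax hxy h0 h1 hv
  have hfL : ∀ v, (G.Adj x v ∨ G.Adj y v) → v ∈ L → v ∉ x :: y :: M → f v ∈ L := by
    intro v hv hvL hvK
    rw [hf v hv hvL hvK]
    simp
  refine Set.ncard_le_ncard_of_injOn (fun v => if v ∈ x :: y :: M then v else f v) ?_ ?_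
    (Set.toFinite _)
  · rintro v ⟨hv, hvL⟩
    by_cases hvK : v ∈ x :: y :: M
    · simp only [if_pos hvK]
      exact ⟨hvL, hvK⟩
    · simp only [if_neg hvK]
      exact ⟨hfL v hv hvL hvK, hfK v hv hvL hvK⟩
  · rintro v ⟨hv, hvL⟩ v' ⟨hv', hvL'⟩ h
    by_cases hvK : v ∈ x :: y :: M <;> by_cases hvK' : v' ∈ x :: y :: M <;>
      simp only [hvK, hvK', if_true, if_false] at h
    · exact h
    · exact absurd (h ▸ hv) (hfN v' hv' hvL' hvK')
    · exact absurd (h ▸ hv') (hfN v hv hvL hvK)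
    -- A vertex of a duplicate-free list has only one predecessor.
    · have e1 := hf v hv hvL hvK
      have e2 := hf v' hv' hvL' hvK'
      rw [← h] at e2
      have n1 := hPn
      have n2 := hPn
      rw [e1] at n1
      rw [e2] at n2
      have e : (s v ++ [v]) ++ f v :: t v = (s v' ++ [v']) ++ f v :: t v' := by
        simpa using e1.symm.trans e2
      have i1 : f v ∉ s v ++ [v] := by grind
      have i2 : f v ∉ s v' ++ [v'] := by grind
      have h1 := congrArg (List.idxOf (f v)) e
      rw [List.idxOf_append_of_notMem i1, List.idxOf_append_of_notMem i2] at h1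
      simp only [List.idxOf_cons_self, add_zero] at h1
      simpa using (List.append_inj' (List.append_inj e h1).1 rfl).2
end

section
/- Let G be a k-connected finite simple graph with k ≥ 3, and let P and Q be two longest paths in G, each of length ℓ. If ℓ ≤ 3k − 3, then P and Q share at least k vertices. -/
/-!
Suppose `P` misses a vertex, and write `P = x₀ … x_l`. By maximality every neighbour of an end of a
path on the vertex set of `P` lies on `P`. Rotating `P` at its first end (Pósa), every `x_i` with
`x₀ ~ x_{i+1}` is such an end; rotating at its last end, so is every `x_{i+1}` with `x_i ~ x_l`.
Each of these two sets of ends has at least `k` elements. If they were disjoint, at most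
`l + 1 - 2k < k` vertices of `P` would have neighbours off `P`, and they would separate the ends
from the rest of the graph, contradicting `k`-connectedness (`IsKConnected.separation`). So some
`x_j` lies in both, which means that `x₀ ~ x_{j+1}` and `x_{j-1} ~ x_l`; hence
`x_{j-1} … x₀ x_{j+1} … x_l` is a cycle `C` of length `l` on the vertices of `P` other than `x_j`
(`exists_cycle`).

As no path has `l + 2` vertices, the vertices off `C` are pairwise nonadjacent
(`adj_mem_of_cycle`). So no two consecutive vertices of `Q` are off `C`, and `Q`, which has `l + 1`
vertices, has at least `l / 2` of them on `C ⊆ P`. Finally `2k ≤ l`: the two sets of indices `i < l`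
with `x₀ ~ x_{i+1}`, respectively `x_i ~ x_l`, are disjoint, because a common index would give a
cycle through all of `P`, which extends to a longer path.
-/

open SimpleGraph

/-- A list of distinct vertices in which consecutive vertices are adjacent: the vertex sequence of
a path (or the empty list). -/
def IsPathList {V : Type*} (G : SimpleGraph V) (L : List V) : Prop :=
  L.IsChain G.Adj ∧ L.Nodup

/-- The last vertex of the list is adjacent to its first vertex, so that a path list becomes a
cyclic sequence. -/
def IsClosedList {V : Type*} (G : SimpleGraph V) (L : List V) : Prop :=
  ∀ x ∈ L.getLast?, ∀ y ∈ L.head?, G.Adj x y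

/-! ### Separation and degrees -/

/-- If `X` has all its outside neighbours in a set `T` of fewer than `k` vertices, then
`X ∪ T` is everything, unless `X ⊆ T`. -/
lemma IsKConnected.separation {V : Type*} [Fintype V] {G : SimpleGraph V} {k : ℕ}
    (hG : IsKConnected G k) (T : Finset V) (hT : T.card < k) (X : Set V)
    (hX : ∀ a ∈ X, ∀ b, G.Adj a b → b ∈ X ∨ b ∈ T) {v w : V} (hv : v ∈ X) (hvT : v ∉ T)
    (hw : w ∉ X) (hwT : w ∉ T) : False := by
  have hc := (hG.2 T hT).preconnected ⟨v, by simpa using hvT⟩ ⟨w, by simpa using hwT⟩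
  obtain ⟨p⟩ := hc
  have key : ∀ {a b : ((↑T : Set V)ᶜ : Set V)} (_ : (G.induce ((↑T : Set V)ᶜ)).Walk a b),
      (a : V) ∈ X → (b : V) ∈ X := by
    intro a b p
    induction p with
    | nil => exact id
    | @cons a b c h p ih =>
      intro ha
      refine ih ?_
      rcases hX a ha b h with h | h
      · exact h
      · exact absurd h b.2
  exact hw (key p hv)

lemma IsKConnected.le_card_neighbors {V : Type*} [Fintype V] [DecidableEq V] {G : SimpleGraph V}
    [DecidableRel G.Adj] {k : ℕ} (hG : IsKConnected G k) (v : V) :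
    k ≤ (Finset.univ.filter (G.Adj v)).card := by
  by_contra! h
  obtain ⟨w, hw⟩ : ∃ w, w ∉ insert v (Finset.univ.filter (G.Adj v)) := by
    by_contra! hall
    have h1 := Finset.card_le_card (fun x _ => hall x : Finset.univ ⊆ _)
    have h2 := Finset.card_insert_le v (Finset.univ.filter (G.Adj v))
    have := hG.1
    rw [Finset.card_univ] at h1
    omega
  simp only [Finset.mem_insert, not_or] at hw
  refine hG.separation _ h {v} ?_ (Set.mem_singleton v) (by simp) (w := w) ?_ hw.2
  · rintro a rfl b hb
    right
    simpa using hb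
  · simpa using hw.1

/-! ### Rotating paths and opening cycles -/

lemma IsPathList.reverse {V : Type*} {G : SimpleGraph V} {L : List V} (h : IsPathList G L) :
    IsPathList G L.reverse := by
  refine ⟨?_, List.nodup_reverse.2 h.2⟩
  rw [List.isChain_reverse]
  exact h.1.imp fun _ _ hab => hab.symm

/-- Pósa rotation at the first end. -/
lemma IsPathList.rotate_left {V : Type*} {G : SimpleGraph V} {s t : List V}
    (h : IsPathList G (s ++ t)) (hadj : ∀ x ∈ s.head?, ∀ y ∈ t.head?, G.Adj x y) :
    IsPathList G (s.reverse ++ t) := by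
  have hs : IsPathList G s := ⟨(List.isChain_append.1 h.1).1, h.2.of_append_left⟩
  refine ⟨List.isChain_append.2 ⟨hs.reverse.1, (List.isChain_append.1 h.1).2.1, ?_⟩, ?_⟩
  · simpa using hadj
  · exact (((List.reverse_perm s).append_right t).nodup_iff).2 h.2

/-- Pósa rotation at the last end, read backwards. -/
lemma IsPathList.rotate_right {V : Type*} {G : SimpleGraph V} {s t : List V}
    (h : IsPathList G (s ++ t)) (hadj : ∀ x ∈ s.getLast?, ∀ y ∈ t.getLast?, G.Adj x y) :
    IsPathList G (t ++ s.reverse) := by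
  have h1 : IsPathList G (t.reverse ++ s.reverse) := by simpa using h.reverse
  have := h1.rotate_left (by
    simp only [List.head?_reverse]
    intro x hx y hy
    exact (hadj y hy x hx).symm)
  simpa using this

/-- A cycle can be cut open at any of its vertices. -/
lemma IsPathList.exists_start {V : Type*} {G : SimpleGraph V} {c : List V} (h : IsPathList G c)
    (hc : IsClosedList G c) {v : V} (hv : v ∈ c) :
    ∃ t, IsPathList G (v :: t) ∧ (v :: t).Perm c := by
  obtain ⟨s, t, rfl⟩ := List.append_of_mem hv
  have hp : (v :: t ++ s).Perm (s ++ v :: t) := List.perm_append_comm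
  refine ⟨t ++ s, ⟨?_, hp.nodup_iff.2 h.2⟩, hp⟩
  obtain ⟨h1, h2, h3⟩ := List.isChain_append.1 h.1
  refine (List.isChain_append (l₁ := v :: t)).2 ⟨h2, h1, fun x hx y hy => hc x ?_ y ?_⟩
  · rw [List.getLast?_append_of_ne_nil _ (by simp)]
    exact hx
  · rw [List.head?_append]
    rw [Option.mem_def] at hy ⊢
    simp [hy]

lemma IsPathList.cons_cycle {V : Type*} {G : SimpleGraph V} {c : List V} (h : IsPathList G c)
    (hc : IsClosedList G c) {v w : V} (hv : v ∈ c) (hw : w ∉ c) (hvw : G.Adj w v) :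
    ∃ t, IsPathList G (w :: v :: t) ∧ (v :: t).Perm c := by
  obtain ⟨t, ht, hp⟩ := h.exists_start hc hv
  refine ⟨t, ⟨?_, ?_⟩, hp⟩
  · rw [List.isChain_cons_cons]
    exact ⟨hvw, ht.1⟩
  · rw [List.nodup_cons]
    exact ⟨fun hm => hw (hp.mem_iff.1 hm), ht.2⟩

/-! ### Cycles and longest paths -/

/-- Maximality: a closed path list that misses a vertex is not the vertex sequence of a longest
path. -/
lemma no_spanning_cycle {V : Type*} [Fintype V] {G : SimpleGraph V} {k n : ℕ} (hk : 0 < k)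
    (hG : IsKConnected G k) (hmax : ∀ L, IsPathList G L → L.length ≤ n) {c : List V}
    (h : IsPathList G c) (hc : IsClosedList G c) (hlen : c.length = n) {v w : V} (hv : v ∈ c)
    (hw : w ∉ c) : False := by
  refine hG.separation ∅ (by simpa using hk) {x | x ∈ c} ?_ hv (by simp) hw (by simp)
  intro a ha b hab
  by_contra hb
  simp only [Set.mem_ofPred_eq, Finset.notMem_empty, or_false] at hb
  obtain ⟨t, ht, hp⟩ := h.cons_cycle hc ha hb hab.symm
  have h1 := hmax _ ht
  have h2 := hp.length_eq
  simp only [List.length_cons] at h1 h2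
  omega

/-- If no path has `c.length + 2` vertices, the vertices off the cycle `c` are independent. -/
lemma adj_mem_of_cycle {V : Type*} [Fintype V] {G : SimpleGraph V} {k : ℕ} (hk : 0 < k)
    (hG : IsKConnected G k) {c : List V} (hmax : ∀ L, IsPathList G L → L.length ≤ c.length + 1)
    (h : IsPathList G c) (hc : IsClosedList G c) {v : V} (hv : v ∈ c) {a b : V}
    (hab : G.Adj a b) : a ∈ c ∨ b ∈ c := by
  by_contra! hn
  -- `X` is the cycle together with the outside vertices all of whose neighbours are on it.
  refine hG.separation ∅ (by simpa using hk) {x | x ∈ c ∨ ∀ y, G.Adj x y → y ∈ c} ?_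
    (Or.inl hv) (by simp) (w := a) ?_ (by simp)
  · intro x hx y hxy
    by_contra! hy
    simp only [Set.mem_ofPred_eq, not_or, not_forall] at hy
    obtain ⟨⟨hyc, z, hyz, hzc⟩, -⟩ := hy
    rcases hx with hx | hx
    · obtain ⟨t, ht, hp⟩ := h.cons_cycle hc hx hyc hxy.symm
      have hlong : IsPathList G (z :: y :: x :: t) := by
        refine ⟨?_, ?_⟩
        · rw [List.isChain_cons_cons]
          exact ⟨hyz.symm, ht.1⟩
        · rw [List.nodup_cons]
          refine ⟨fun hm => ?_, ht.2⟩
          rcases List.mem_cons.1 hm with rfl | hm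
          · exact hyz.ne rfl
          · exact hzc (hp.mem_iff.1 hm)
      have h1 := hmax _ hlong
      have h2 := hp.length_eq
      simp only [List.length_cons] at h1 h2
      omega
    · exact hyc (hx y hxy)
  · rintro (h | h)
    · exact hn.1 h
    · exact hn.2 (h b hab)

/-! ### The cycle missing one vertex of a longest path -/

/-- A longest path on `l + 1 ≤ 3k - 2` vertices that misses a vertex has all but one of its
vertices on a cycle of length `l`. -/
lemma exists_cycle {V : Type*} [Fintype V] {G : SimpleGraph V} {k l : ℕ} (hk : 3 ≤ k)
    (hG : IsKConnected G k) (hl : l ≤ 3 * k - 3)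
    (hmax : ∀ L, IsPathList G L → L.length ≤ l + 1) {L : List V} (h : IsPathList G L)
    (hlen : L.length = l + 1) {w : V} (hw : w ∉ L) :
    2 * k ≤ l ∧ ∃ c, IsPathList G c ∧ IsClosedList G c ∧ c.length = l ∧ c ⊆ L := by
  classical
  obtain ⟨x, hx⟩ : ∃ x : ℕ → V, ∀ i ≤ l, L[i]? = some (x i) :=
    ⟨fun i => L.getD i w, fun i hi => by
      simp [List.getElem?_eq_getElem (show i < L.length by omega)]⟩
  have hxmem : ∀ i ≤ l, x i ∈ L := fun i hi => List.mem_of_getElem? (hx i hi)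
  have hmemx : ∀ v ∈ L, ∃ i ≤ l, x i = v := by
    intro v hv
    obtain ⟨i, hi, rfl⟩ := List.getElem_of_mem hv
    refine ⟨i, by omega, ?_⟩
    have := hx i (by omega)
    rw [List.getElem?_eq_getElem hi] at this
    exact (Option.some.inj this).symm
  have hxinj : ∀ i ≤ l, ∀ j ≤ l, x i = x j → i = j := by
    intro i hi j hj hij
    refine (List.getElem?_inj (by omega) h.2).1 ?_
    rw [hx i hi, hx j hj, hij]
  have hhead : ∀ i, (L.take (i + 1)).head? = some (x 0) := by
    intro i
    rw [List.head?_take, if_neg (by omega), List.head?_eq_getElem?, hx 0 (by omega)]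
  have hlast : ∀ i ≤ l, (L.take (i + 1)).getLast? = some (x i) := by
    intro i hi
    rw [List.getLast?_take, if_neg (by omega), Nat.add_sub_cancel, hx i hi]
    rfl
  have hhead' : ∀ i ≤ l, (L.drop i).head? = some (x i) := by
    intro i hi
    rw [List.head?_drop, hx i hi]
  have hlast' : ∀ i ≤ l, (L.drop i).getLast? = some (x l) := by
    intro i hi
    rw [List.getLast?_drop, if_neg (by omega), List.getLast?_eq_getElem?, hlen,
      Nat.add_sub_cancel, hx l le_rfl]
  -- A vertex that starts a path on the vertices of `L` has all its neighbours in `L`.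
  have hend : ∀ M : List V, IsPathList G M → M.Perm L → ∀ v ∈ M.head?, ∀ u, G.Adj v u → u ∈ L := by
    intro M hM hp v hv u hvu
    by_contra hu
    have hlong : IsPathList G (u :: M) := by
      refine ⟨List.isChain_cons.2 ⟨?_, hM.1⟩, List.nodup_cons.2 ⟨?_, hM.2⟩⟩
      · intro y hy
        rw [Option.mem_def] at hv hy
        rw [hv] at hy
        rw [← Option.some.inj hy]
        exact hvu.symm
      · exact fun hm => hu (hp.mem_iff.1 hm)
    have := hmax _ hlong
    rw [List.length_cons, hp.length_eq] at this
    omega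
  have hsplit : ∀ i, IsPathList G (L.take i ++ L.drop i) := fun i => by
    rwa [List.take_append_drop]
  have hend0 : ∀ i < l, G.Adj (x 0) (x (i + 1)) → ∀ u, G.Adj (x i) u → u ∈ L := by
    intro i hi hadj
    refine hend _ ((hsplit (i + 1)).rotate_left ?_) ?_ (x i) ?_
    · rw [hhead, hhead' _ (by omega)]
      simpa using hadj
    · conv_rhs => rw [← List.take_append_drop (i + 1) L]
      exact (List.reverse_perm _).append_right _
    · rw [List.head?_append, List.head?_reverse, hlast i (by omega)]
      rfl
  have hend1 : ∀ i < l, G.Adj (x i) (x l) → ∀ u, G.Adj (x (i + 1)) u → u ∈ L := by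
    intro i hi hadj
    refine hend _ ((hsplit (i + 1)).rotate_right ?_) ?_ (x (i + 1)) ?_
    · rw [hlast i (by omega), hlast' _ (by omega)]
      simpa using hadj
    · conv_rhs => rw [← List.take_append_drop (i + 1) L]
      exact List.perm_append_comm.trans ((List.reverse_perm _).append_right _)
    · rw [List.head?_append, hhead' _ (by omega)]
      rfl
  have hnb0 : ∀ u, G.Adj (x 0) u → u ∈ L := by
    refine hend L h (List.Perm.refl L) (x 0) ?_
    rw [List.head?_eq_getElem?, hx 0 (by omega)]
    rfl
  have hnbl : ∀ u, G.Adj (x l) u → u ∈ L := by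
    refine hend L.reverse h.reverse (List.reverse_perm L) (x l) ?_
    rw [List.head?_reverse, List.getLast?_eq_getElem?, hlen, Nat.add_sub_cancel, hx l le_rfl]
    rfl
  set A := (Finset.range l).filter fun i => G.Adj (x 0) (x (i + 1)) with hA
  set B := (Finset.range l).filter fun i => G.Adj (x i) (x l) with hB
  have hAk : k ≤ A.card := by
    refine (hG.le_card_neighbors (x 0)).trans
      ((Finset.card_le_card ?_).trans (Finset.card_image_le (f := fun i => x (i + 1))))
    intro u hu
    have hu : G.Adj (x 0) u := by simpa using hu
    obtain ⟨i, hi, rfl⟩ := hmemx u (hnb0 u hu)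
    have hi0 : i ≠ 0 := by
      rintro rfl
      exact hu.ne rfl
    obtain ⟨j, rfl⟩ := Nat.exists_eq_succ_of_ne_zero hi0
    exact Finset.mem_image.2 ⟨j, by
      simp only [hA, Finset.mem_filter, Finset.mem_range]
      exact ⟨by omega, hu⟩, rfl⟩
  have hBk : k ≤ B.card := by
    refine (hG.le_card_neighbors (x l)).trans
      ((Finset.card_le_card ?_).trans (Finset.card_image_le (f := x)))
    intro u hu
    have hu : G.Adj (x l) u := by simpa using hu
    obtain ⟨i, hi, rfl⟩ := hmemx u (hnbl u hu)
    have hil : i ≠ l := by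
      rintro rfl
      exact hu.ne rfl
    exact Finset.mem_image.2 ⟨i, by
      simp only [hB, Finset.mem_filter, Finset.mem_range]
      exact ⟨by omega, hu.symm⟩, rfl⟩
  have hdisj : Disjoint A B := by
    rw [Finset.disjoint_left]
    intro i hiA hiB
    simp only [hA, hB, Finset.mem_filter, Finset.mem_range] at hiA hiB
    have hp : ((L.take (i + 1)).reverse ++ L.drop (i + 1)).Perm L := by
      conv_rhs => rw [← List.take_append_drop (i + 1) L]
      exact (List.reverse_perm _).append_right _
    refine no_spanning_cycle (by omega) hG hmax ((hsplit (i + 1)).rotate_left ?_) ?_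
      (hp.length_eq.trans hlen) (hp.mem_iff.2 (hxmem 0 (by omega))) (fun hm => hw (hp.mem_iff.1 hm))
    · rw [hhead, hhead' _ (by omega)]
      simpa using hiA.2
    · intro y hy z hz
      rw [List.getLast?_append, hlast' _ (by omega)] at hy
      rw [List.head?_append, List.head?_reverse, hlast i (by omega)] at hz
      obtain rfl : x l = y := by simpa using hy
      obtain rfl : x i = z := by simpa using hz
      exact hiB.2.symm
  have h2k : 2 * k ≤ l := by
    have h1 := Finset.card_union_of_disjoint hdisj
    have h2 : (A ∪ B).card ≤ (Finset.range l).card :=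
      Finset.card_le_card (Finset.union_subset (Finset.filter_subset _ _)
        (Finset.filter_subset _ _))
    rw [Finset.card_range] at h2
    omega
  refine ⟨h2k, ?_⟩
  -- The indices of the ends are `A` and `B + 1`; these meet, for else the other vertices separate.
  obtain ⟨j, hjA, hjB⟩ : ∃ j, j + 1 ∈ A ∧ j ∈ B := by
    by_contra! hno
    have hdisj' : Disjoint A (B.image (· + 1)) := by
      rw [Finset.disjoint_left]
      intro i hi hi'
      obtain ⟨j, hj, rfl⟩ := Finset.mem_image.1 hi'
      exact hno j hi hj
    have hBc : (B.image (· + 1)).card = B.card :=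
      Finset.card_image_of_injective _ (add_left_injective 1)
    set I := A ∪ B.image (· + 1) with hI
    have hIc : 2 * k ≤ I.card := by
      rw [hI, Finset.card_union_of_disjoint hdisj']
      omega
    have hIsub : I ⊆ Finset.range (l + 1) := by
      intro i hi
      simp only [hI, hA, hB, Finset.mem_union, Finset.mem_image, Finset.mem_filter,
        Finset.mem_range] at hi ⊢
      rcases hi with hi | ⟨j, hj, rfl⟩ <;> omega
    have hInb : ∀ i ∈ I, ∀ u, G.Adj (x i) u → u ∈ L := by
      intro i hi
      simp only [hI, hA, hB, Finset.mem_union, Finset.mem_image, Finset.mem_filter,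
        Finset.mem_range] at hi
      rcases hi with hi | ⟨j, hj, rfl⟩
      · exact hend0 i hi.1 hi.2
      · exact hend1 j hj.1 hj.2
    have hJc := Finset.card_sdiff_of_subset hIsub
    rw [Finset.card_range] at hJc
    obtain ⟨i, hi⟩ : I.Nonempty := Finset.card_pos.1 (by omega)
    refine hG.separation ((Finset.range (l + 1) \ I).image x)
      (lt_of_le_of_lt Finset.card_image_le (by omega)) (x '' (I : Set ℕ)) ?_ ⟨i, hi, rfl⟩ ?_
      (w := w) ?_ ?_
    · rintro _ ⟨i, hi, rfl⟩ b hb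
      obtain ⟨j, hj, rfl⟩ := hmemx b (hInb i hi b hb)
      by_cases hjI : j ∈ I
      · exact Or.inl ⟨j, hjI, rfl⟩
      · refine Or.inr (Finset.mem_image_of_mem x ?_)
        simp only [Finset.mem_sdiff, Finset.mem_range]
        exact ⟨by omega, hjI⟩
    · intro hm
      obtain ⟨j, hj, hji⟩ := Finset.mem_image.1 hm
      rw [Finset.mem_sdiff, Finset.mem_range] at hj
      have hil := Finset.mem_range.1 (hIsub hi)
      exact hj.2 (hxinj j (by omega) i (by omega) hji ▸ hi)
    · rintro ⟨j, hj, rfl⟩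
      exact hw (hxmem j (by have := Finset.mem_range.1 (hIsub hj); omega))
    · intro hm
      obtain ⟨j, hj, rfl⟩ := Finset.mem_image.1 hm
      rw [Finset.mem_sdiff, Finset.mem_range] at hj
      exact hw (hxmem j (by omega))
  simp only [hA, hB, Finset.mem_filter, Finset.mem_range] at hjA hjB
  -- `x_j … x₀` and `x_{j+2} … x_l` close up to a cycle that leaves out `x_{j+1}`.
  have hsub : (L.take (j + 1) ++ L.drop (j + 1 + 1)).Sublist L := by
    conv_rhs => rw [← List.take_append_drop (j + 1) L]
    exact (List.Sublist.refl _).append (List.drop_sublist_drop_left L (by omega))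
  refine ⟨(L.take (j + 1)).reverse ++ L.drop (j + 1 + 1), ⟨?_, ?_⟩, ?_, ?_, ?_⟩
  · have hs : IsPathList G (L.take (j + 1)) := ⟨h.1.take _, h.2.sublist (List.take_sublist _ _)⟩
    refine List.isChain_append.2 ⟨hs.reverse.1, h.1.drop _, ?_⟩
    rw [List.getLast?_reverse, hhead, hhead' _ (by omega)]
    simpa using hjA.2
  · exact (((List.reverse_perm _).append_right _).nodup_iff).2 (h.2.sublist hsub)
  · intro y hy z hz
    rw [List.getLast?_append, hlast' _ (by omega)] at hy
    rw [List.head?_append, List.head?_reverse, hlast j (by omega)] at hz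
    obtain rfl : x l = y := by simpa using hy
    obtain rfl : x j = z := by simpa using hz
    exact hjB.2.symm
  · simp only [List.length_append, List.length_reverse, List.length_take, List.length_drop, hlen]
    omega
  · intro y hy
    exact hsub.subset (((List.reverse_perm _).append_right _).mem_iff.1 hy)

/-! ### Counting common vertices -/

lemma length_le_two_mul_countP {V : Type*} (p : V → Bool) :
    ∀ L : List V, L.IsChain (fun a b => p a = true ∨ p b = true) →
      L.length ≤ 2 * L.countP p + 1
  | [], _ => by simp
  | [a], _ => by simp
  | a :: b :: L, h => by
    rw [List.isChain_cons_cons] at h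
    have ih := length_le_two_mul_countP p L h.2.of_cons
    rcases h.1 with h1 | h1 <;>
      simp only [List.countP_cons, List.length_cons, h1, if_true] <;> omega

theorem stmt_9 {V : Type*} [Fintype V] (G : SimpleGraph V) (k l : ℕ) (hk : 3 ≤ k)
    (hG : IsKConnected G k) {a b c d : V} (P : G.Walk a b) (Q : G.Walk c d)
    (hP : IsLongestPath G P) (hQ : IsLongestPath G Q)
    (hPl : P.length = l) (hQl : Q.length = l) (hl : l ≤ 3 * k - 3) :
    k ≤ ({v | v ∈ P.support} ∩ {v | v ∈ Q.support}).ncard := by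
  classical
  have hPL : IsPathList G P.support := ⟨P.isChain_adj_support, hP.1.support_nodup⟩
  have hQL : IsPathList G Q.support := ⟨Q.isChain_adj_support, hQ.1.support_nodup⟩
  have hPlen : P.support.length = l + 1 := by rw [Walk.length_support, hPl]
  have hQlen : Q.support.length = l + 1 := by rw [Walk.length_support, hQl]
  have hmax : ∀ L, IsPathList G L → L.length ≤ l + 1 := by
    intro L hL
    by_cases hne : L = []
    · simp [hne]
    · have hs := Walk.support_ofSupport hne hL.1
      have := hP.2 (Walk.ofSupport L hne hL.1) (by rw [Walk.isPath_def, hs]; exact hL.2)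
      have hlen := congrArg List.length hs
      rw [Walk.length_support] at hlen
      omega
  by_cases hall : ∀ w, w ∈ P.support
  · have hset : {v | v ∈ P.support} ∩ {v | v ∈ Q.support} = (Q.support.toFinset : Set V) := by
      ext v
      simp [hall v]
    have hcard : Fintype.card V ≤ P.support.length := by
      rw [← Finset.card_univ]
      refine (Finset.card_le_card ?_).trans P.support.toFinset_card_le
      intro v _
      simpa using hall v
    have := hG.1
    rw [hset, Set.ncard_coe_finset, List.toFinset_card_of_nodup hQL.2]
    omega
  · push Not at hall
    obtain ⟨w, hw⟩ := hall
    obtain ⟨h2k, C, hC, hCc, hClen, hCsub⟩ := exists_cycle hk hG hl hmax hPL hPlen hw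
    obtain ⟨v, hv⟩ : ∃ v, v ∈ C := List.exists_mem_of_length_pos (by omega)
    have hind : ∀ a b, G.Adj a b → a ∈ C ∨ b ∈ C := fun a b hab =>
      adj_mem_of_cycle (by omega) hG (by rwa [hClen]) hC hCc hv hab
    have hcount := length_le_two_mul_countP (fun v => decide (v ∈ C)) Q.support
      (hQL.1.imp fun a b hab => by simpa using hind a b hab)
    rw [hQlen, List.countP_eq_length_filter,
      ← List.toFinset_card_of_nodup (hQL.2.filter _)] at hcount
    have hsub : (((Q.support.filter fun v => decide (v ∈ C)).toFinset : Finset V) : Set V) ⊆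
        {v | v ∈ P.support} ∩ {v | v ∈ Q.support} := by
      intro u hu
      have hu : u ∈ Q.support ∧ u ∈ C := by simpa using hu
      exact ⟨hCsub hu.2, hu.1⟩
    have hfin := Set.ncard_le_ncard hsub (Set.toFinite _)
    rw [Set.ncard_coe_finset] at hfin
    omega
end
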